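/- arXiv:2508.03887 — 3 statements merged into one kernel-verified Lean document; each statement's English description precedes it below -/
import Mathlib

section
/- Let n > 1 and let K, L ⊆ ℝⁿ be strictly convex bodies with cross covariogram g = g_{K,L}. If max_x g(x) < min{vol(K), vol(L)}, then g^{1/n} is strictly concave on its support: for all x₀, x₁ ∈ K + (−L) with x₀ ≠ x₁ and all t ∈ (0,1), one has g((1−t)x₀ + t x₁)^{1/n} > (1−t) g(x₀)^{1/n} + t g(x₁)^{1/n}. -/
open MeasureTheory Set Pointwise
open scoped ENNReal

theorem volume_add_le_volume_add_of_isCompact {A B : Set ℝ} (hA : IsCompact A) (hB : IsCompact B)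
    (hA' : A.Nonempty) (hB' : B.Nonempty) : volume A + volume B ≤ volume (A + B) := by
  obtain ⟨a, haA, ha⟩ := hA.exists_isGreatest hA'
  obtain ⟨b, hbB, hb⟩ := hB.exists_isLeast hB'
  have hsub : (b +ᵥ A) ∪ (a +ᵥ B) ⊆ A + B := by
    rintro _ (⟨x, hx, rfl⟩ | ⟨x, hx, rfl⟩)
    · exact ⟨x, hx, b, hbB, add_comm _ _⟩
    · exact ⟨a, haA, x, hx, rfl⟩
  have hinter : (b +ᵥ A) ∩ (a +ᵥ B) ⊆ {a + b} := by
    rintro _ ⟨⟨x, hx, rfl⟩, ⟨y, hy, hxy⟩⟩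
    have h1 := ha hx
    have h2 := hb hy
    simp only [vadd_eq_add, mem_singleton_iff] at hxy ⊢
    linarith
  have hnull : volume ((b +ᵥ A) ∩ (a +ᵥ B)) = 0 :=
    measure_mono_null hinter (measure_singleton _)
  calc volume A + volume B = volume (b +ᵥ A) + volume (a +ᵥ B) := by
        simp only [measure_vadd]
    _ = volume ((b +ᵥ A) ∪ (a +ᵥ B)) := by
        rw [measure_union₀ (hB.measurableSet.const_vadd a).nullMeasurableSet hnull]
    _ ≤ volume (A + B) := measure_mono hsub

/-- The one-dimensional Brunn–Minkowski inequality for measurable sets. -/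
theorem volume_add_le_volume_add {A B : Set ℝ} (hA : MeasurableSet A) (hB : MeasurableSet B)
    (hA' : A.Nonempty) (hB' : B.Nonempty) : volume A + volume B ≤ volume (A + B) := by
  obtain ⟨a, ha⟩ := hA'
  obtain ⟨b, hb⟩ := hB'
  rcases eq_or_ne (volume A) 0 with hA0 | hA0
  · rw [hA0, zero_add, ← measure_vadd volume a B]
    exact measure_mono (by rintro _ ⟨x, hx, rfl⟩; exact ⟨a, ha, x, hx, rfl⟩)
  rcases eq_or_ne (volume B) 0 with hB0 | hB0
  · rw [hB0, add_zero, ← measure_vadd volume b A]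
    exact measure_mono (by rintro _ ⟨x, hx, rfl⟩; exact ⟨x, hx, b, hb, add_comm _ _⟩)
  refine le_of_forall_lt fun r hr => ?_
  obtain ⟨u, hu, v, hv, huv⟩ := ENNReal.exists_lt_add_of_lt_add hr hA0 hB0
  obtain ⟨K, hKA, hK, huK⟩ := hA.exists_lt_isCompact hu
  obtain ⟨K', hKB, hK', hvK⟩ := hB.exists_lt_isCompact hv
  calc r < u + v := huv
    _ ≤ volume K + volume K' := add_le_add huK.le hvK.le
    _ ≤ volume (K + K') := volume_add_le_volume_add_of_isCompact hK hK'
        (nonempty_of_measure_ne_zero (bot_le.trans_lt huK).ne')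
        (nonempty_of_measure_ne_zero (bot_le.trans_lt hvK).ne')
    _ ≤ volume (A + B) := measure_mono (add_subset_add hKA hKB)

theorem ofReal_mul_volume_add_le_volume_smul_add_smul {A B : Set ℝ} (hA : MeasurableSet A)
    (hB : MeasurableSet B) (hA' : A.Nonempty) (hB' : B.Nonempty) {a b : ℝ} (ha : 0 < a)
    (hb : 0 < b) :
    ENNReal.ofReal a * volume A + ENNReal.ofReal b * volume B ≤ volume (a • A + b • B) := by
  have h := volume_add_le_volume_add (hA.const_smul₀ a) (hB.const_smul₀ b)
    (hA'.image _) (hB'.image _)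
  simpa [Measure.addHaar_smul, abs_of_pos, ha, hb] using h

theorem lintegral_eq_lintegral_meas_ofReal_lt {α : Type*} [MeasurableSpace α] (μ : Measure α)
    {f : α → ℝ≥0∞} (hf : Measurable f) (hfin : ∀ x, f x ≠ ∞) :
    ∫⁻ x, f x ∂μ = ∫⁻ r in Ioi (0 : ℝ), μ {x | ENNReal.ofReal r < f x} := by
  have h := lintegral_eq_lintegral_meas_lt μ (f := fun x => (f x).toReal)
    (Filter.Eventually.of_forall fun x => ENNReal.toReal_nonneg) hf.ennreal_toReal.aemeasurable
  simp only [ENNReal.ofReal_toReal (hfin _)] at h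
  rw [h]
  refine setLIntegral_congr_fun measurableSet_Ioi fun r hr => ?_
  simp only [ENNReal.ofReal_lt_iff_lt_toReal (le_of_lt hr) (hfin _)]

theorem ennreal_rpow_mul_rpow_le_add {a b : ℝ} (ha : 0 < a) (hb : 0 < b) (hab : a + b = 1)
    (x y : ℝ≥0∞) : x ^ a * y ^ b ≤ ENNReal.ofReal a * x + ENNReal.ofReal b * y := by
  rcases eq_or_ne x ∞ with rfl | hx
  · simp [ENNReal.mul_top, ha]
  rcases eq_or_ne y ∞ with rfl | hy
  · simp [ENNReal.mul_top, hb]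
  lift x to NNReal using hx
  lift y to NNReal using hy
  have h := NNReal.geom_mean_le_arith_mean2_weighted a.toNNReal b.toNNReal x y
    (by rw [← Real.toNNReal_add ha.le hb.le, hab, Real.toNNReal_one])
  rw [Real.coe_toNNReal _ ha.le, Real.coe_toNNReal _ hb.le] at h
  rw [← ENNReal.coe_rpow_of_nonneg _ ha.le, ← ENNReal.coe_rpow_of_nonneg _ hb.le]
  unfold ENNReal.ofReal
  exact_mod_cast h

theorem lintegral_add_le_of_iSup_eq_one {f g h : ℝ → ℝ≥0∞} (hf : Measurable f) (hg : Measurable g)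
    (hh : Measurable h) {a b : ℝ} (ha : 0 < a) (hb : 0 < b) (hab : a + b = 1)
    (hf1 : ⨆ x, f x = 1) (hg1 : ⨆ x, g x = 1)
    (hfgh : ∀ x y, f x ^ a * g y ^ b ≤ h (a * x + b * y)) :
    ENNReal.ofReal a * (∫⁻ x, f x) + ENNReal.ofReal b * (∫⁻ x, g x) ≤ ∫⁻ x, h x := by
  have hf_le : ∀ x, f x ≤ 1 := fun x => hf1 ▸ le_iSup f x
  have hg_le : ∀ x, g x ≤ 1 := fun x => hg1 ▸ le_iSup g x
  have hmeas : ∀ {k : ℝ → ℝ≥0∞}, Measurable k → ∀ r : ℝ,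
      MeasurableSet {x | ENNReal.ofReal r < k x} := fun hk r => measurableSet_lt measurable_const hk
  have hanti : ∀ k : ℝ → ℝ≥0∞, Antitone fun r : ℝ => volume {x | ENNReal.ofReal r < k x} :=
    fun k r s hrs => measure_mono fun x hx => (ENNReal.ofReal_le_ofReal hrs).trans_lt hx
  calc ENNReal.ofReal a * (∫⁻ x, f x) + ENNReal.ofReal b * (∫⁻ x, g x)
      = ∫⁻ r in Ioi (0 : ℝ), (ENNReal.ofReal a * volume {x | ENNReal.ofReal r < f x} +
          ENNReal.ofReal b * volume {x | ENNReal.ofReal r < g x}) := by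
        rw [lintegral_eq_lintegral_meas_ofReal_lt volume hf
            fun x => ((hf_le x).trans_lt ENNReal.one_lt_top).ne,
          lintegral_eq_lintegral_meas_ofReal_lt volume hg
            fun x => ((hg_le x).trans_lt ENNReal.one_lt_top).ne,
          ← lintegral_const_mul _ (hanti f).measurable,
          ← lintegral_const_mul _ (hanti g).measurable,
          lintegral_add_left ((hanti f).measurable.const_mul _)]
    _ ≤ ∫⁻ r in Ioi (0 : ℝ), volume {x | ENNReal.ofReal r < min (h x) 1} := by
        refine setLIntegral_mono (hanti _).measurable fun r hr => ?_
        rcases lt_or_ge (ENNReal.ofReal r) 1 with hr1 | hr1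
        · have hf' : {x | ENNReal.ofReal r < f x}.Nonempty := lt_iSup_iff.1 (hr1.trans_eq hf1.symm)
          have hg' : {x | ENNReal.ofReal r < g x}.Nonempty := lt_iSup_iff.1 (hr1.trans_eq hg1.symm)
          refine (ofReal_mul_volume_add_le_volume_smul_add_smul (hmeas hf r) (hmeas hg r)
            hf' hg' ha hb).trans (measure_mono ?_)
          rintro _ ⟨_, ⟨x, hx, rfl⟩, _, ⟨y, hy, rfl⟩, rfl⟩
          refine lt_min ?_ hr1
          calc ENNReal.ofReal r = ENNReal.ofReal r ^ a * ENNReal.ofReal r ^ b := by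
                rw [← ENNReal.rpow_add_of_nonneg _ _ ha.le hb.le, hab, ENNReal.rpow_one]
            _ < f x ^ a * g y ^ b := ENNReal.mul_lt_mul (ENNReal.rpow_lt_rpow hx ha)
                (ENNReal.rpow_lt_rpow hy hb)
            _ ≤ h (a * x + b * y) := hfgh x y
        · have hempty : ∀ {k : ℝ → ℝ≥0∞}, (∀ x, k x ≤ 1) → {x | ENNReal.ofReal r < k x} = ∅ :=
            fun hk => eq_empty_of_forall_notMem fun x hx => (hx.trans_le (hk x)).not_ge hr1
          simp [hempty hf_le, hempty hg_le]
    _ = ∫⁻ x, min (h x) 1 := (lintegral_eq_lintegral_meas_ofReal_lt volume (hh.min measurable_const)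
            fun x => ((min_le_right _ _).trans_lt ENNReal.one_lt_top).ne).symm
    _ ≤ ∫⁻ x, h x := lintegral_mono fun x => min_le_left _ _

theorem prekopaLeindler_real_of_bounded {f g h : ℝ → ℝ≥0∞} (hf : Measurable f) (hg : Measurable g)
    (hh : Measurable h) {a b : ℝ} (ha : 0 < a) (hb : 0 < b) (hab : a + b = 1)
    (hfb : ⨆ x, f x ≠ ∞) (hgb : ⨆ x, g x ≠ ∞)
    (hfgh : ∀ x y, f x ^ a * g y ^ b ≤ h (a * x + b * y)) :
    (∫⁻ x, f x) ^ a * (∫⁻ x, g x) ^ b ≤ ∫⁻ x, h x := by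
  set F := ⨆ x, f x with hF
  set G := ⨆ x, g x with hG
  rcases eq_or_ne F 0 with hF0 | hF0
  · have : ∀ x, f x = 0 := ENNReal.iSup_eq_zero.1 (hF ▸ hF0)
    simp [this, ha]
  rcases eq_or_ne G 0 with hG0 | hG0
  · have : ∀ x, g x = 0 := ENNReal.iSup_eq_zero.1 (hG ▸ hG0)
    simp [this, hb]
  have hFa0 : F ^ a ≠ 0 := by simp [hF0, hfb]
  have hGb0 : G ^ b ≠ 0 := by simp [hG0, hgb]
  have hFat : F ^ a ≠ ∞ := ENNReal.rpow_ne_top_of_nonneg ha.le hfb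
  have hGbt : G ^ b ≠ ∞ := ENNReal.rpow_ne_top_of_nonneg hb.le hgb
  have key := lintegral_add_le_of_iSup_eq_one (hf.const_mul F⁻¹) (hg.const_mul G⁻¹)
    (hh.const_mul (F ^ a * G ^ b)⁻¹) ha hb hab
    (by rw [← ENNReal.mul_iSup, ← hF, ENNReal.inv_mul_cancel hF0 hfb])
    (by rw [← ENNReal.mul_iSup, ← hG, ENNReal.inv_mul_cancel hG0 hgb])
    (fun x y => by
      rw [ENNReal.mul_rpow_of_nonneg _ _ ha.le, ENNReal.mul_rpow_of_nonneg _ _ hb.le,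
        mul_mul_mul_comm, ENNReal.inv_rpow, ENNReal.inv_rpow,
        ENNReal.mul_inv (Or.inl hFa0) (Or.inl hFat)]
      gcongr
      exact hfgh x y)
  have key2 := (ennreal_rpow_mul_rpow_le_add ha hb hab _ _).trans key
  rw [lintegral_const_mul _ hf, lintegral_const_mul _ hg, lintegral_const_mul _ hh,
    ENNReal.mul_rpow_of_nonneg _ _ ha.le, ENNReal.mul_rpow_of_nonneg _ _ hb.le,
    mul_mul_mul_comm, ENNReal.inv_rpow, ENNReal.inv_rpow,
    ← ENNReal.mul_inv (Or.inl hFa0) (Or.inl hFat)] at key2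
  exact (ENNReal.mul_le_mul_iff_right (ENNReal.inv_ne_zero.2 (ENNReal.mul_ne_top hFat hGbt))
    (ENNReal.inv_ne_top.2 (mul_ne_zero hFa0 hGb0))).1 key2

theorem tendsto_lintegral_min_natCast {α : Type*} [MeasurableSpace α] (μ : Measure α)
    {f : α → ℝ≥0∞} (hf : Measurable f) :
    Filter.Tendsto (fun k : ℕ => ∫⁻ x, min (f x) k ∂μ) Filter.atTop (nhds (∫⁻ x, f x ∂μ)) := by
  refine lintegral_tendsto_of_tendsto_of_monotone
    (fun k => (hf.min measurable_const).aemeasurable) ?_ ?_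
  · exact Filter.Eventually.of_forall fun x k l hkl => min_le_min_left _ (by exact_mod_cast hkl)
  · refine Filter.Eventually.of_forall fun x => ?_
    have := (tendsto_const_nhds (x := f x)).min ENNReal.tendsto_nat_nhds_top
    simpa using this

theorem prekopaLeindler_real {f g h : ℝ → ℝ≥0∞} (hf : Measurable f) (hg : Measurable g)
    (hh : Measurable h) {a b : ℝ} (ha : 0 < a) (hb : 0 < b) (hab : a + b = 1)
    (hfgh : ∀ x y, f x ^ a * g y ^ b ≤ h (a * x + b * y)) :
    (∫⁻ x, f x) ^ a * (∫⁻ x, g x) ^ b ≤ ∫⁻ x, h x := by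
  have hbdd : ∀ k : ℕ, (∫⁻ x, min (f x) k) ^ a * (∫⁻ x, min (g x) k) ^ b ≤ ∫⁻ x, h x := by
    intro k
    have hk : ∀ u : ℝ → ℝ≥0∞, ⨆ x, min (u x) k ≠ ∞ := fun u =>
      ((iSup_le fun x => min_le_right _ _).trans_lt (ENNReal.natCast_lt_top k)).ne
    refine prekopaLeindler_real_of_bounded (hf.min measurable_const) (hg.min measurable_const) hh
      ha hb hab (hk f) (hk g) fun x y => le_trans ?_ (hfgh x y)
    gcongr <;> exact min_le_left _ _
  by_cases hzero : (∫⁻ x, f x) = 0 ∨ (∫⁻ x, g x) = 0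
  · rcases hzero with h0 | h0 <;> simp [h0, ha, hb]
  push Not at hzero
  refine le_of_tendsto (ENNReal.Tendsto.mul
    ((tendsto_lintegral_min_natCast volume hf).ennrpow_const a) (Or.inl ?_)
    ((tendsto_lintegral_min_natCast volume hg).ennrpow_const b) (Or.inl ?_))
    (Filter.Eventually.of_forall hbdd)
  · simp [hzero.1, ha.not_gt]
  · simp [hzero.2, hb.not_gt]

/-- The **Prékopa–Leindler inequality** on `ℝⁿ`. -/
theorem prekopaLeindler {a b : ℝ} (ha : 0 < a) (hb : 0 < b) (hab : a + b = 1) (n : ℕ)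
    {f g h : (Fin n → ℝ) → ℝ≥0∞} (hf : Measurable f) (hg : Measurable g) (hh : Measurable h)
    (hfgh : ∀ x y, f x ^ a * g y ^ b ≤ h (a • x + b • y)) :
    (∫⁻ x, f x) ^ a * (∫⁻ x, g x) ^ b ≤ ∫⁻ x, h x := by
  induction n with
  | zero =>
    have hvol : (volume : Measure (Fin 0 → ℝ)) univ = 1 := by simp [volume_pi]
    simp only [lintegral_unique, hvol, mul_one]
    exact (hfgh _ _).trans_eq (congrArg h (Subsingleton.elim _ _))
  | succ n ih =>
    let e := (MeasurableEquiv.piFinSuccAbove (fun _ : Fin (n + 1) => ℝ) 0).symm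
    have he : MeasurePreserving e :=
      (volume_preserving_piFinSuccAbove (fun _ : Fin (n + 1) => ℝ) 0).symm _
    have hlin : ∀ (x y : ℝ) (u v : Fin n → ℝ),
        a • e (x, u) + b • e (y, v) = e (a * x + b * y, a • u + b • v) := by
      intro x y u v
      ext i
      refine Fin.cases ?_ (fun j => ?_) i <;>
        simp [e, MeasurableEquiv.piFinSuccAbove]
    have hInt : ∀ {k : (Fin (n + 1) → ℝ) → ℝ≥0∞}, Measurable k →
        ∫⁻ z, k z = ∫⁻ x, ∫⁻ u, k (e (x, u)) := fun {k} hk => by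
      rw [← he.lintegral_comp hk]
      exact lintegral_prod _ (hk.comp e.measurable).aemeasurable
    have hmeas : ∀ {k : (Fin (n + 1) → ℝ) → ℝ≥0∞}, Measurable k →
        Measurable fun x => ∫⁻ u, k (e (x, u)) := fun hk =>
      (hk.comp e.measurable).lintegral_prod_right'
    have hsec : ∀ {k : (Fin (n + 1) → ℝ) → ℝ≥0∞}, Measurable k → ∀ x,
        Measurable fun u => k (e (x, u)) := fun hk x =>
      (hk.comp e.measurable).comp measurable_prodMk_left
    rw [hInt hf, hInt hg, hInt hh]
    refine prekopaLeindler_real (hmeas hf) (hmeas hg) (hmeas hh) ha hb hab fun x y => ?_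
    refine ih (hsec hf x) (hsec hg y) (hsec hh _) fun u v => ?_
    rw [← hlin]
    exact hfgh _ _

/-- The multiplicative form of the Brunn–Minkowski inequality. -/
theorem volume_rpow_mul_volume_rpow_le {n : ℕ} {A B C : Set (EuclideanSpace ℝ (Fin n))}
    (hA : MeasurableSet A) (hB : MeasurableSet B) (hC : MeasurableSet C) {a b : ℝ} (ha : 0 < a)
    (hb : 0 < b) (hab : a + b = 1) (hABC : a • A + b • B ⊆ C) :
    volume A ^ a * volume B ^ b ≤ volume C := by
  have hmp := PiLp.volume_preserving_toLp (Fin n)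
  have hind : ∀ {S : Set (EuclideanSpace ℝ (Fin n))}, MeasurableSet S →
      Measurable (fun x : Fin n → ℝ => S.indicator (1 : EuclideanSpace ℝ (Fin n) → ℝ≥0∞) (WithLp.toLp 2 x)) :=
    fun hS => (measurable_one.indicator hS).comp hmp.measurable
  have hInt : ∀ {S : Set (EuclideanSpace ℝ (Fin n))}, MeasurableSet S →
      ∫⁻ x : Fin n → ℝ, S.indicator (1 : EuclideanSpace ℝ (Fin n) → ℝ≥0∞) (WithLp.toLp 2 x) = volume S := fun hS => by
    rw [hmp.lintegral_comp (measurable_one.indicator hS), lintegral_indicator_one hS]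
  rw [← hInt hA, ← hInt hB, ← hInt hC]
  refine prekopaLeindler ha hb hab n (hind hA) (hind hB) (hind hC) fun x y => ?_
  by_cases hx : WithLp.toLp 2 x ∈ A
  · by_cases hy : WithLp.toLp 2 y ∈ B
    · have : WithLp.toLp 2 (a • x + b • y) ∈ C :=
        hABC ⟨_, smul_mem_smul_set hx, _, smul_mem_smul_set hy, rfl⟩
      rw [indicator_of_mem hx, indicator_of_mem hy, indicator_of_mem this]
      simp
    · simp [hy, hb]
  · simp [hx, ha]

/-- The **Brunn–Minkowski inequality** for nonempty compact sets. -/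
theorem brunnMinkowski {n : ℕ} (hn : n ≠ 0) {A B : Set (EuclideanSpace ℝ (Fin n))}
    (hA : IsCompact A) (hB : IsCompact B) (hA' : A.Nonempty) (hB' : B.Nonempty) {a b : ℝ}
    (ha : 0 < a) (hb : 0 < b) :
    a * (volume A).toReal ^ (1 / (n : ℝ)) + b * (volume B).toReal ^ (1 / (n : ℝ)) ≤
      (volume (a • A + b • B)).toReal ^ (1 / (n : ℝ)) := by
  set C := a • A + b • B with hC
  have hCc : IsCompact C := (hA.smul a).add (hB.smul b)
  set α := (volume A).toReal ^ (1 / (n : ℝ)) with hα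
  set β := (volume B).toReal ^ (1 / (n : ℝ)) with hβ
  have hα0 : 0 ≤ α := by positivity
  have hβ0 : 0 ≤ β := by positivity
  have hαn : α ^ n = (volume A).toReal := by
    rw [hα, one_div, Real.rpow_inv_natCast_pow ENNReal.toReal_nonneg hn]
  have hβn : β ^ n = (volume B).toReal := by
    rw [hβ, one_div, Real.rpow_inv_natCast_pow ENNReal.toReal_nonneg hn]
  have hscale : ∀ (S : Set (EuclideanSpace ℝ (Fin n))) {c : ℝ}, 0 ≤ c →
      volume (c • S) = ENNReal.ofReal (c ^ n) * volume S := fun S c hc => by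
    rw [Measure.addHaar_smul, finrank_euclideanSpace_fin, abs_of_nonneg (by positivity)]
  suffices h : (a * α + b * β) ^ n ≤ (volume C).toReal by
    rw [one_div, ← Real.pow_rpow_inv_natCast (x := a * α + b * β) (by positivity) hn]
    exact Real.rpow_le_rpow (by positivity) h (by positivity)
  rw [← ENNReal.ofReal_le_iff_le_toReal hCc.measure_ne_top]
  obtain ⟨p, hp⟩ := hA'
  obtain ⟨q, hq⟩ := hB'
  rcases hα0.eq_or_lt with hα0 | hα0
  · rw [← hα0, mul_zero, zero_add, mul_pow, hβn, ENNReal.ofReal_mul (by positivity),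
      ENNReal.ofReal_toReal hB.measure_ne_top, ← hscale B hb.le,
      ← measure_vadd volume (a • p) (b • B)]
    refine measure_mono ?_
    rintro _ ⟨x, hx, rfl⟩
    exact ⟨a • p, smul_mem_smul_set hp, x, hx, rfl⟩
  rcases hβ0.eq_or_lt with hβ0 | hβ0
  · rw [← hβ0, mul_zero, add_zero, mul_pow, hαn, ENNReal.ofReal_mul (by positivity),
      ENNReal.ofReal_toReal hA.measure_ne_top, ← hscale A ha.le,
      ← measure_vadd volume (b • q) (a • A)]
    refine measure_mono ?_
    rintro _ ⟨x, hx, rfl⟩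
    exact ⟨x, hx, b • q, smul_mem_smul_set hq, add_comm _ _⟩
  have hs : 0 < a * α + b * β := by positivity
  set s := a * α + b * β with hs_def
  have hA1 : volume (α⁻¹ • A) = 1 := by
    rw [hscale A (by positivity), ← ENNReal.ofReal_toReal hA.measure_ne_top, ← hαn,
      ← ENNReal.ofReal_mul (by positivity), ← mul_pow, inv_mul_cancel₀ hα0.ne', one_pow,
      ENNReal.ofReal_one]
  have hB1 : volume (β⁻¹ • B) = 1 := by
    rw [hscale B (by positivity), ← ENNReal.ofReal_toReal hB.measure_ne_top, ← hβn,
      ← ENNReal.ofReal_mul (by positivity), ← mul_pow, inv_mul_cancel₀ hβ0.ne', one_pow,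
      ENNReal.ofReal_one]
  have h := volume_rpow_mul_volume_rpow_le (hA.smul α⁻¹).measurableSet (hB.smul β⁻¹).measurableSet
    (hCc.smul s⁻¹).measurableSet (a := a * α / s) (b := b * β / s) (by positivity) (by positivity)
    (by rw [← add_div, ← hs_def, div_self hs.ne'])
    (by
      rw [smul_smul, smul_smul, hC, smul_add, smul_smul, smul_smul]
      refine subset_of_eq ?_
      congr 2 <;> field_simp)
  rw [hA1, hB1, ENNReal.one_rpow, ENNReal.one_rpow, one_mul, hscale C (by positivity)] at h
  calc ENNReal.ofReal (s ^ n) ≤ ENNReal.ofReal (s ^ n) * (ENNReal.ofReal (s⁻¹ ^ n) * volume C) :=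
        le_mul_of_one_le_right' h
    _ = volume C := by
        rw [← mul_assoc, ← ENNReal.ofReal_mul (by positivity), ← mul_pow, mul_inv_cancel₀ hs.ne',
          one_pow, ENNReal.ofReal_one, one_mul]

section Convex

variable {E : Type*} [NormedAddCommGroup E] [NormedSpace ℝ E]

/-- In dimension greater than one, the boundary of a bounded convex set with nonempty interior is
connected. -/
theorem Convex.isPreconnected_frontier (hE : 1 < Module.rank ℝ E) {M : Set E} (hM : Convex ℝ M)
    (hInt : (interior M).Nonempty) (hb : Bornology.IsBounded M) : IsPreconnected (frontier M) := by
  obtain ⟨e, -, -, he⟩ := exists_homeomorph_image_interior_closure_frontier_eq_unitBall hM hInt hb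
  rw [← e.isPreconnected_image, he]
  exact isPreconnected_sphere hE 0 1

theorem subset_of_inter_subset_interior {K N : Set E} (hK : Convex ℝ K) (hN : IsClosed N)
    (hne : (K ∩ N).Nonempty) (h : K ∩ N ⊆ interior N) : K ⊆ N := by
  have hsub : K ⊆ interior N ∪ Nᶜ := fun x hx => by
    by_cases hxN : x ∈ N
    · exact Or.inl (h ⟨hx, hxN⟩)
    · exact Or.inr hxN
  obtain ⟨x, hx⟩ := hne
  exact (hK.isPreconnected.subset_left_of_subset_union isOpen_interior hN.isOpen_compl
    (disjoint_compl_right.mono_left interior_subset) hsub ⟨x, hx.1, h hx⟩).trans interior_subset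

/-- If no boundary point of `K ∩ N` lies on both boundaries, then one of the convex sets `K`, `N`
contains the other. -/
theorem subset_or_subset_of_frontier_inter_subset (hE : 1 < Module.rank ℝ E) {K N : Set E}
    (hK : Convex ℝ K) (hN : Convex ℝ N) (hKc : IsClosed K) (hNc : IsClosed N)
    (hb : Bornology.IsBounded (K ∩ N)) (hInt : (interior (K ∩ N)).Nonempty)
    (h : frontier (K ∩ N) ⊆ interior K ∪ interior N) : K ⊆ N ∨ N ⊆ K := by
  have hne : (K ∩ N).Nonempty := hInt.mono interior_subset
  have hmem : ∀ {U : Set E}, interior (K ∩ N) ⊆ U → frontier (K ∩ N) ⊆ U → K ∩ N ⊆ U :=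
    fun hi hf x hx => by
      by_cases hxi : x ∈ interior (K ∩ N)
      · exact hi hxi
      · exact hf ⟨subset_closure hx, hxi⟩
  have hdisj : frontier (K ∩ N) ∩ (interior K ∩ interior N) = ∅ := by
    rw [← interior_inter]
    exact disjoint_interior_frontier.symm.inter_eq
  rcases isPreconnected_iff_subset_of_disjoint.1
    ((hK.inter hN).isPreconnected_frontier hE hInt hb) _ _ isOpen_interior isOpen_interior h hdisj
    with hf | hf
  · refine Or.inr (subset_of_inter_subset_interior hN hKc (inter_comm K N ▸ hne) ?_)
    rw [inter_comm]
    exact hmem (interior_mono inter_subset_left) hf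
  · exact Or.inl (subset_of_inter_subset_interior hK hNc hne
      (hmem (interior_mono inter_subset_right) hf))

theorem StrictConvex.add_mem_interior_vadd {L : Set E} (hL : StrictConvex ℝ L) {x₀ x₁ p q : E}
    (hp : p ∈ x₀ +ᵥ L) (hq : q ∈ x₁ +ᵥ L) (hne : p - x₀ ≠ q - x₁) {a b : ℝ} (ha : 0 < a)
    (hb : 0 < b) (hab : a + b = 1) :
    a • p + b • q ∈ interior ((a • x₀ + b • x₁) +ᵥ L) := by
  rw [mem_vadd_set_iff_neg_vadd_mem, vadd_eq_add, neg_add_eq_sub] at hp hq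
  rw [interior_vadd, mem_vadd_set_iff_neg_vadd_mem, vadd_eq_add]
  convert! hL hp hq hne ha hb hab using 1
  module

theorem StrictConvex.add_mem_interior_or {K L : Set E} (hK : StrictConvex ℝ K)
    (hL : StrictConvex ℝ L) {x₀ x₁ p q : E} (hx : x₀ ≠ x₁) (hp : p ∈ K ∩ (x₀ +ᵥ L))
    (hq : q ∈ K ∩ (x₁ +ᵥ L)) {a b : ℝ} (ha : 0 < a) (hb : 0 < b) (hab : a + b = 1) :
    a • p + b • q ∈ interior K ∪ interior ((a • x₀ + b • x₁) +ᵥ L) := by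
  rcases ne_or_eq p q with hpq | rfl
  · exact Or.inl (hK hp.1 hq.1 hpq ha hb hab)
  · exact Or.inr (hL.add_mem_interior_vadd hp.2 hq.2 (fun h => hx (sub_right_injective h))
      ha hb hab)

theorem Convex.smul_inter_vadd_add_subset {K L : Set E} (hK : Convex ℝ K) (hL : Convex ℝ L)
    (x₀ x₁ : E) {a b : ℝ} (ha : 0 ≤ a) (hb : 0 ≤ b) (hab : a + b = 1) :
    a • (K ∩ (x₀ +ᵥ L)) + b • (K ∩ (x₁ +ᵥ L)) ⊆ K ∩ ((a • x₀ + b • x₁) +ᵥ L) := by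
  rintro _ ⟨_, ⟨p, hp, rfl⟩, _, ⟨q, hq, rfl⟩, rfl⟩
  refine ⟨hK hp.1 hq.1 ha hb hab, ?_⟩
  obtain ⟨u, hu, rfl⟩ := hp.2
  obtain ⟨v, hv, rfl⟩ := hq.2
  refine ⟨a • u + b • v, hL hu hv ha hb hab, ?_⟩
  simp only [vadd_eq_add]
  module

theorem interior_inter_nonempty_of_mem_interior {K N : Set E} (hN : Convex ℝ N)
    (hNi : (interior N).Nonempty) {c : E} (hcK : c ∈ interior K) (hcN : c ∈ N) :
    (interior (K ∩ N)).Nonempty := by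
  rw [interior_inter]
  refine mem_closure_iff.1 ?_ _ isOpen_interior hcK
  rw [hN.closure_interior_eq_closure_of_nonempty_interior hNi]
  exact subset_closure hcN

theorem Convex.subset_of_measure_le [MeasurableSpace E] [BorelSpace E] (μ : Measure E)
    [μ.IsOpenPosMeasure] {C M : Set E} (hM : Convex ℝ M) (hInt : (interior M).Nonempty)
    (hC : IsClosed C) (hCM : C ⊆ M) (hfin : μ C ≠ ∞) (hle : μ M ≤ μ C) : M ⊆ C := by
  have hnull : μ (M \ C) = 0 := by
    rw [measure_sdiff hCM hC.nullMeasurableSet hfin, tsub_eq_zero_of_le hle]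
  have hempty : interior M \ C = ∅ :=
    (isOpen_interior.sdiff hC).eq_empty_of_measure_zero
      (measure_mono_null (sdiff_subset_sdiff_left interior_subset) hnull)
  calc M ⊆ closure M := subset_closure
    _ = closure (interior M) := (hM.closure_interior_eq_closure_of_nonempty_interior hInt).symm
    _ ⊆ C := closure_minimal (sdiff_eq_empty.1 hempty) hC

end Convex

theorem nonempty_inter_vadd_of_mem_add_neg {E : Type*} [AddCommGroup E] {K L : Set E} {x : E}
    (hx : x ∈ K + -L) : (K ∩ (x +ᵥ L)).Nonempty := by
  obtain ⟨p, hp, q, hq, rfl⟩ := hx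
  exact ⟨p, hp, -q, hq, by simp⟩

/-- Theorem 1.1 (Strict 1/n-concavity): if `K, L` are strictly convex bodies in `ℝⁿ`, `n > 1`,
and `max g_{K,L} < min {|K|, |L|}`, then `g_{K,L}^{1/n}` is strictly concave on its support. -/
theorem strict_concavity_of_strictly_convex
    (n : ℕ) (hn : 1 < n)
    (K L : Set (EuclideanSpace ℝ (Fin n)))
    (hKcomp : IsCompact K) (hKconv : Convex ℝ K) (hKint : (interior K).Nonempty)
    (hKstrict : StrictConvex ℝ K)
    (hLcomp : IsCompact L) (hLconv : Convex ℝ L) (hLint : (interior L).Nonempty)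
    (hLstrict : StrictConvex ℝ L)
    (g : EuclideanSpace ℝ (Fin n) → ℝ)
    (hg : ∀ x, g x = (volume (K ∩ (x +ᵥ L))).toReal)
    (hmax : ∀ x, g x < min (volume K).toReal (volume L).toReal) :
    ∀ x₀ ∈ K + -L, ∀ x₁ ∈ K + -L, x₀ ≠ x₁ → ∀ t ∈ Ioo (0 : ℝ) 1,
      (1 - t) * g x₀ ^ (1 / (n : ℝ)) + t * g x₁ ^ (1 / (n : ℝ))
        < g ((1 - t) • x₀ + t • x₁) ^ (1 / (n : ℝ)) := by
  intro x₀ hx₀ x₁ hx₁ hne t ht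
  have ha : 0 < 1 - t := sub_pos.2 ht.2
  have hb : 0 < t := ht.1
  have hab : 1 - t + t = 1 := sub_add_cancel 1 t
  have hA : IsCompact (K ∩ (x₀ +ᵥ L)) := hKcomp.inter (hLcomp.vadd x₀)
  have hB : IsCompact (K ∩ (x₁ +ᵥ L)) := hKcomp.inter (hLcomp.vadd x₁)
  have hA' := nonempty_inter_vadd_of_mem_add_neg hx₀
  have hB' := nonempty_inter_vadd_of_mem_add_neg hx₁
  set N := ((1 - t) • x₀ + t • x₁) +ᵥ L with hN
  set C := (1 - t) • (K ∩ (x₀ +ᵥ L)) + t • (K ∩ (x₁ +ᵥ L)) with hC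
  have hNcomp : IsCompact N := hLcomp.vadd _
  have hNconv : Convex ℝ N := hLconv.vadd _
  have hNint : (interior N).Nonempty := by
    rw [hN, interior_vadd]
    exact hLint.image _
  have hCcomp : IsCompact C := (hA.smul _).add (hB.smul _)
  have hCsub : C ⊆ K ∩ N := hKconv.smul_inter_vadd_add_subset hLconv x₀ x₁ ha.le hb.le hab
  have hCmem : C ⊆ interior K ∪ interior N := by
    rintro _ ⟨_, ⟨p, hp, rfl⟩, _, ⟨q, hq, rfl⟩, rfl⟩
    exact hKstrict.add_mem_interior_or hLstrict hne hp hq ha hb hab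
  have hMint : (interior (K ∩ N)).Nonempty := by
    obtain ⟨c, hc⟩ : C.Nonempty := (hA'.image _).add (hB'.image _)
    rcases hCmem hc with hcK | hcN
    · exact interior_inter_nonempty_of_mem_interior hNconv hNint hcK (hCsub hc).2
    · rw [inter_comm]
      exact interior_inter_nonempty_of_mem_interior hKconv hKint hcN (hCsub hc).1
  have hMcomp : IsCompact (K ∩ N) := hKcomp.inter hNcomp
  have hlt : volume C < volume (K ∩ N) := by
    by_contra! hle
    have hMC := (hKconv.inter hNconv).subset_of_measure_le volume hMint hCcomp.isClosed hCsub
      hCcomp.measure_ne_top hle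
    have hlt := lt_min_iff.1 (hmax ((1 - t) • x₀ + t • x₁))
    rw [hg, ← hN] at hlt
    rcases subset_or_subset_of_frontier_inter_subset
      (by rw [rank_eq_card_basis (EuclideanSpace.basisFun (Fin n) ℝ).toBasis]; simpa using hn)
      hKconv hNconv hKcomp.isClosed hNcomp.isClosed hMcomp.isBounded hMint
      ((hMcomp.isClosed.frontier_subset.trans hMC).trans hCmem) with hsub | hsub
    · rw [inter_eq_self_of_subset_left hsub] at hlt
      exact lt_irrefl _ hlt.1
    · rw [inter_eq_self_of_subset_right hsub, hN, measure_vadd] at hlt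
      exact lt_irrefl _ hlt.2
  rw [hg, hg, hg, ← hN]
  refine (brunnMinkowski (by lia) hA hB hA' hB' ha hb).trans_lt ?_
  exact Real.rpow_lt_rpow ENNReal.toReal_nonneg
    (ENNReal.toReal_strict_mono hMcomp.measure_ne_top hlt) (by positivity)
end

section
/- Let n > 1, let K, L ⊆ ℝⁿ be nonempty closed convex sets whose cross covariogram g = g_{K,L} satisfies 0 < g(a) < ∞, and let a, w ∈ ℝⁿ with w ≠ 0. If g(a + tw) = g(a) > 0 for all t ∈ [−1,1], then there exists a vector v ∈ ℝⁿ such that, for all t ∈ [−1,1], K ∩ (L + a + tw) = K' ∩ (L' + tw), where K' := {x + sv : x ∈ K, s ∈ ℝ} is the cylinder in the direction v generated by K, and L' := {x + s(v−w) : x ∈ L + a, s ∈ ℝ} is the cylinder in the direction v−w generated by L + a. -/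
open MeasureTheory Set Pointwise
open scoped ENNReal NNReal

/-- The Prékopa–Leindler inequality with weight `l`, as a property of a measure. -/
def PrekopaLeindler {E : Type*} [AddCommGroup E] [Module ℝ E] [MeasurableSpace E]
    (μ : Measure E) (l : ℝ) : Prop :=
  ∀ f g h : E → ℝ≥0∞, Measurable f → Measurable g → Measurable h →
    (∀ x y, f x ^ (1 - l) * g y ^ l ≤ h ((1 - l) • x + l • y)) →
    (∫⁻ x, f x ∂μ) ^ (1 - l) * (∫⁻ x, g x ∂μ) ^ l ≤ ∫⁻ x, h x ∂μ

namespace PrekopaLeindler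

theorem volume_add_volume_le_of_isCompact {A B C : Set ℝ} (hA : IsCompact A) (hB : IsCompact B)
    (hA0 : A.Nonempty) (hB0 : B.Nonempty) (hC : ∀ x ∈ A, ∀ y ∈ B, x + y ∈ C) :
    volume A + volume B ≤ volume C := by
  obtain ⟨a, ha, ha'⟩ := hA.exists_isGreatest hA0
  obtain ⟨b, hb, hb'⟩ := hB.exists_isLeast hB0
  have hsub : (b +ᵥ A) ∪ (a +ᵥ B) ⊆ C := by
    rintro _ (⟨x, hx, rfl⟩ | ⟨y, hy, rfl⟩)
    · simpa [add_comm] using hC x hx b hb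
    · exact hC a ha y hy
  have hdis : AEDisjoint volume (b +ᵥ A) (a +ᵥ B) := by
    refine measure_mono_null (t := {a + b}) ?_ (by simp)
    rintro _ ⟨⟨x, hx, rfl⟩, ⟨y, hy, h⟩⟩
    have h1 := ha' hx
    have h2 := hb' hy
    simp only [vadd_eq_add] at h ⊢
    simp only [mem_singleton_iff]
    linarith
  calc volume A + volume B = volume (b +ᵥ A) + volume (a +ᵥ B) := by simp [measure_vadd]
    _ = volume ((b +ᵥ A) ∪ (a +ᵥ B)) :=
      (measure_union₀ (hB.vadd a).measurableSet.nullMeasurableSet hdis).symm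
    _ ≤ volume C := measure_mono hsub

theorem volume_add_volume_le {A B C : Set ℝ} (hA : MeasurableSet A) (hB : MeasurableSet B)
    (hA0 : A.Nonempty) (hB0 : B.Nonempty) (hC : ∀ x ∈ A, ∀ y ∈ B, x + y ∈ C) :
    volume A + volume B ≤ volume C := by
  obtain ⟨a, ha⟩ := hA0
  obtain ⟨b, hb⟩ := hB0
  rw [hA.measure_eq_iSup_isCompact, hB.measure_eq_iSup_isCompact]
  simp only [iSup_and']
  refine ENNReal.biSup_add_biSup_le' ⟨∅, empty_subset _, isCompact_empty⟩
    ⟨∅, empty_subset _, isCompact_empty⟩ ?_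
  rintro S ⟨hSA, hS⟩ T ⟨hTB, hT⟩
  calc volume S + volume T ≤ volume (insert a S) + volume (insert b T) :=
        add_le_add (measure_mono (subset_insert _ _)) (measure_mono (subset_insert _ _))
    _ ≤ volume C := volume_add_volume_le_of_isCompact (hS.insert a) (hT.insert b)
        (insert_nonempty _ _) (insert_nonempty _ _) fun x hx y hy =>
          hC x (insert_subset ha hSA hx) y (insert_subset hb hTB hy)

theorem weighted_volume_add_le {l : ℝ} (h0 : 0 < l) (h1 : l < 1) {A B C : Set ℝ}
    (hA : MeasurableSet A) (hB : MeasurableSet B) (hA0 : A.Nonempty) (hB0 : B.Nonempty)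
    (hC : ∀ x ∈ A, ∀ y ∈ B, (1 - l) • x + l • y ∈ C) :
    ENNReal.ofReal (1 - l) * volume A + ENNReal.ofReal l * volume B ≤ volume C := by
  have h1' : 0 < 1 - l := sub_pos.2 h1
  have := volume_add_volume_le (C := C) (hA.const_smul_of_ne_zero h1'.ne')
    (hB.const_smul_of_ne_zero h0.ne') hA0.smul_set hB0.smul_set (by
      rintro _ ⟨x, hx, rfl⟩ _ ⟨y, hy, rfl⟩
      exact hC x hx y hy)
  simpa [Measure.addHaar_smul, abs_of_pos h0, abs_of_pos h1'] using this

theorem lintegral_eq_lintegral_meas_lt_of_le_one {f : ℝ → ℝ≥0∞} (hf : Measurable f)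
    (hf1 : ∀ x, f x ≤ 1) :
    ∫⁻ x, f x = ∫⁻ t in Ioo (0 : ℝ) 1, volume {x | ENNReal.ofReal t < f x} := by
  have hfin : ∀ x, f x ≠ ∞ := fun x => ((hf1 x).trans_lt ENNReal.one_lt_top).ne
  calc ∫⁻ x, f x = ∫⁻ x, ENNReal.ofReal (f x).toReal := by
        simp only [ENNReal.ofReal_toReal (hfin _)]
    _ = ∫⁻ t in Ioi (0 : ℝ), volume {x | t < (f x).toReal} :=
        lintegral_eq_lintegral_meas_lt _ (ae_of_all _ fun _ => ENNReal.toReal_nonneg)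
          hf.ennreal_toReal.aemeasurable
    _ = ∫⁻ t in Ioo (0 : ℝ) 1, volume {x | t < (f x).toReal} := by
        rw [← lintegral_inter_add_sdiff _ (Ioi (0 : ℝ)) measurableSet_Ioo (B := Ioo 0 1),
          inter_eq_self_of_subset_right Ioo_subset_Ioi_self]
        refine (congrArg _ (setLIntegral_eq_zero
          (measurableSet_Ioi.diff measurableSet_Ioo) ?_)).trans (add_zero _)
        rintro t ⟨ht, ht'⟩
        simp only [Pi.zero_apply]
        have ht1 : 1 ≤ t := by
          by_contra! hlt
          exact ht' ⟨ht, hlt⟩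
        convert measure_empty (μ := (volume : Measure ℝ))
        ext x
        simpa using (ENNReal.toReal_mono ENNReal.one_ne_top (hf1 x)).trans (by simpa using ht1)
    _ = _ := by
        refine setLIntegral_congr_fun measurableSet_Ioo fun t ht => ?_
        simp only [ENNReal.ofReal_lt_iff_lt_toReal ht.1.le (hfin _)]

theorem weighted_lintegral_add_le {l : ℝ} (h0 : 0 < l) (h1 : l < 1) {f g h : ℝ → ℝ≥0∞}
    (hf : Measurable f) (hg : Measurable g) (hh : Measurable h)
    (hf1 : ⨆ x, f x = 1) (hg1 : ⨆ x, g x = 1)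
    (H : ∀ x y, f x ^ (1 - l) * g y ^ l ≤ h ((1 - l) • x + l • y)) :
    ENNReal.ofReal (1 - l) * (∫⁻ x, f x) + ENNReal.ofReal l * ∫⁻ x, g x ≤ ∫⁻ x, h x := by
  have h1' : 0 < 1 - l := sub_pos.2 h1
  have meas : ∀ {k : ℝ → ℝ≥0∞}, Measurable fun t : ℝ => volume {x | ENNReal.ofReal t < k x} :=
    fun {k} => Antitone.measurable fun s t hst => measure_mono fun x hx =>
      (ENNReal.ofReal_le_ofReal hst).trans_lt hx
  have hlt : ∀ {k : ℝ → ℝ≥0∞}, ⨆ x, k x = 1 → ∀ t ∈ Ioo (0 : ℝ) 1,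
      {x | ENNReal.ofReal t < k x}.Nonempty := fun {k} hk t ht => by
    have : ENNReal.ofReal t < ⨆ x, k x := by
      rw [hk]; exact ENNReal.ofReal_lt_one.2 ht.2
    exact lt_iSup_iff.1 this
  calc ENNReal.ofReal (1 - l) * (∫⁻ x, f x) + ENNReal.ofReal l * ∫⁻ x, g x
      = ∫⁻ t in Ioo (0 : ℝ) 1, (ENNReal.ofReal (1 - l) * volume {x | ENNReal.ofReal t < f x}
          + ENNReal.ofReal l * volume {x | ENNReal.ofReal t < g x}) := by
        rw [lintegral_eq_lintegral_meas_lt_of_le_one hf fun x => hf1 ▸ le_iSup f x,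
          lintegral_eq_lintegral_meas_lt_of_le_one hg fun x => hg1 ▸ le_iSup g x,
          lintegral_add_left (meas.const_mul _), lintegral_const_mul _ meas,
          lintegral_const_mul _ meas]
    _ ≤ ∫⁻ t in Ioo (0 : ℝ) 1, volume {x | ENNReal.ofReal t < min (h x) 1} := by
        refine setLIntegral_mono meas fun t ht => ?_
        refine weighted_volume_add_le h0 h1 (measurableSet_lt measurable_const hf)
          (measurableSet_lt measurable_const hg) (hlt hf1 t ht) (hlt hg1 t ht) ?_
        intro x hx y hy
        refine lt_min (lt_of_lt_of_le ?_ (H x y)) (ENNReal.ofReal_lt_one.2 ht.2)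
        have ht0 : ENNReal.ofReal t ≠ 0 := by simpa using ht.1
        calc ENNReal.ofReal t = ENNReal.ofReal t ^ (1 - l) * ENNReal.ofReal t ^ l := by
              rw [← ENNReal.rpow_add _ _ ht0 ENNReal.ofReal_ne_top]; simp
          _ < f x ^ (1 - l) * g y ^ l :=
              ENNReal.mul_lt_mul (ENNReal.rpow_lt_rpow hx h1') (ENNReal.rpow_lt_rpow hy h0)
    _ = ∫⁻ x, min (h x) 1 := (lintegral_eq_lintegral_meas_lt_of_le_one (hh.min measurable_const)
        fun x => min_le_right _ _).symm
    _ ≤ ∫⁻ x, h x := lintegral_mono fun x => min_le_left _ _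

theorem ennreal_geom_mean_le {l : ℝ} (h0 : 0 < l) (h1 : l < 1) (a b : ℝ≥0∞) :
    a ^ (1 - l) * b ^ l ≤ ENNReal.ofReal (1 - l) * a + ENNReal.ofReal l * b := by
  have h1' : 0 < 1 - l := sub_pos.2 h1
  rcases eq_or_ne a ∞ with rfl | ha
  · simp [ENNReal.mul_top, h1]
  rcases eq_or_ne b ∞ with rfl | hb
  · simp [ENNReal.mul_top, h0]
  lift a to ℝ≥0 using ha
  lift b to ℝ≥0 using hb
  rw [← ENNReal.coe_rpow_of_nonneg _ h1'.le, ← ENNReal.coe_rpow_of_nonneg _ h0.le]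
  have := NNReal.geom_mean_le_arith_mean2_weighted (1 - l).toNNReal l.toNNReal a b (by
    rw [← Real.toNNReal_add h1'.le h0.le]; simp)
  rw [Real.coe_toNNReal _ h1'.le, Real.coe_toNNReal _ h0.le] at this
  rw [ENNReal.ofReal, ENNReal.ofReal]
  exact_mod_cast this

theorem real_of_bounded {l : ℝ} (h0 : 0 < l) (h1 : l < 1) {f g h : ℝ → ℝ≥0∞}
    (hf : Measurable f) (hg : Measurable g) (hh : Measurable h)
    (hf1 : ⨆ x, f x ≠ ∞) (hg1 : ⨆ x, g x ≠ ∞)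
    (H : ∀ x y, f x ^ (1 - l) * g y ^ l ≤ h ((1 - l) • x + l • y)) :
    (∫⁻ x, f x) ^ (1 - l) * (∫⁻ x, g x) ^ l ≤ ∫⁻ x, h x := by
  have h1' : 0 < 1 - l := sub_pos.2 h1
  rcases eq_or_ne (⨆ x, f x) 0 with hf0 | hf0
  · simp [ENNReal.iSup_eq_zero.1 hf0, h1]
  rcases eq_or_ne (⨆ x, g x) 0 with hg0 | hg0
  · simp [ENNReal.iSup_eq_zero.1 hg0, h0]
  set a := ⨆ x, f x with ha
  set b := ⨆ x, g x with hb
  have hab0 : a ^ (1 - l) * b ^ l ≠ 0 := by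
    simp [hf0, hf1, hg0, hg1, ENNReal.rpow_eq_zero_iff]
  have habt : a ^ (1 - l) * b ^ l ≠ ∞ :=
    ENNReal.mul_ne_top (ENNReal.rpow_ne_top_of_nonneg h1'.le hf1)
      (ENNReal.rpow_ne_top_of_nonneg h0.le hg1)
  have key := weighted_lintegral_add_le h0 h1 (hf.const_mul a⁻¹) (hg.const_mul b⁻¹)
    (hh.const_mul (a ^ (1 - l) * b ^ l)⁻¹)
    (by rw [← ENNReal.mul_iSup, ← ha, ENNReal.inv_mul_cancel hf0 hf1])
    (by rw [← ENNReal.mul_iSup, ← hb, ENNReal.inv_mul_cancel hg0 hg1])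
    (fun x y => by
      rw [ENNReal.mul_rpow_of_nonneg _ _ h1'.le, ENNReal.mul_rpow_of_nonneg _ _ h0.le,
        mul_mul_mul_comm, ENNReal.mul_inv (Or.inr (ENNReal.rpow_ne_top_of_nonneg h0.le hg1))
          (Or.inl (ENNReal.rpow_ne_top_of_nonneg h1'.le hf1)), ENNReal.inv_rpow, ENNReal.inv_rpow]
      gcongr
      exact H x y)
  rw [lintegral_const_mul _ hf, lintegral_const_mul _ hg, lintegral_const_mul _ hh] at key
  have key' := (ennreal_geom_mean_le h0 h1 _ _).trans key
  rw [ENNReal.mul_rpow_of_nonneg _ _ h1'.le, ENNReal.mul_rpow_of_nonneg _ _ h0.le,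
    mul_mul_mul_comm, ENNReal.inv_rpow, ENNReal.inv_rpow,
    ← ENNReal.mul_inv (Or.inr (ENNReal.rpow_ne_top_of_nonneg h0.le hg1))
          (Or.inl (ENNReal.rpow_ne_top_of_nonneg h1'.le hf1))] at key'
  exact (ENNReal.mul_le_mul_iff_right (ENNReal.inv_ne_zero.2 habt) (ENNReal.inv_ne_top.2 hab0)).1
    key'

theorem tendsto_lintegral_min_natCast {α : Type*} [MeasurableSpace α] (μ : Measure α)
    {f : α → ℝ≥0∞} (hf : Measurable f) :
    Filter.Tendsto (fun N : ℕ => ∫⁻ x, min (f x) N ∂μ) Filter.atTop (nhds (∫⁻ x, f x ∂μ)) := by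
  refine lintegral_tendsto_of_tendsto_of_monotone
    (fun N => (hf.min measurable_const).aemeasurable)
    (ae_of_all _ fun x N M hNM => min_le_min_left _ (by exact_mod_cast hNM))
    (ae_of_all _ fun x => ?_)
  simpa using (tendsto_const_nhds (x := f x)).min ENNReal.tendsto_nat_nhds_top

protected theorem real {l : ℝ} (h0 : 0 < l) (h1 : l < 1) :
    PrekopaLeindler (volume : Measure ℝ) l := by
  intro f g h hf hg hh H
  have h1' : 0 < 1 - l := sub_pos.2 h1
  rcases eq_or_ne (∫⁻ x, f x) 0 with hf0 | hf0
  · simp [hf0, h1]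
  rcases eq_or_ne (∫⁻ x, g x) 0 with hg0 | hg0
  · simp [hg0, h0]
  have lim := ENNReal.Tendsto.mul
    ((ENNReal.continuous_rpow_const (y := 1 - l)).tendsto _ |>.comp
      (tendsto_lintegral_min_natCast volume hf))
    (Or.inl (by simp [ENNReal.rpow_eq_zero_iff, hf0, h1'.not_gt]))
    ((ENNReal.continuous_rpow_const (y := l)).tendsto _ |>.comp
      (tendsto_lintegral_min_natCast volume hg))
    (Or.inl (by simp [ENNReal.rpow_eq_zero_iff, hg0, h0.not_gt]))
  refine le_of_tendsto' lim fun N => ?_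
  have bdd : ∀ k : ℝ → ℝ≥0∞, ⨆ x, min (k x) N ≠ ∞ := fun k =>
    ((iSup_le fun x => min_le_right _ _).trans_lt (ENNReal.natCast_lt_top N)).ne
  refine real_of_bounded h0 h1 (hf.min measurable_const) (hg.min measurable_const) hh
    (bdd f) (bdd g) fun x y => le_trans ?_ (H x y)
  gcongr <;> exact min_le_left _ _

protected theorem prod {E F : Type*} [AddCommGroup E] [Module ℝ E] [MeasurableSpace E]
    [AddCommGroup F] [Module ℝ F] [MeasurableSpace F]
    {μ : Measure E} {ν : Measure F}
    [SFinite μ] [SFinite ν] {l : ℝ} (hμ : PrekopaLeindler μ l) (hν : PrekopaLeindler ν l) :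
    PrekopaLeindler (μ.prod ν) l := by
  intro f g h hf hg hh H
  rw [lintegral_prod _ hf.aemeasurable, lintegral_prod _ hg.aemeasurable,
    lintegral_prod _ hh.aemeasurable]
  refine hμ _ _ _ hf.lintegral_prod_right' hg.lintegral_prod_right' hh.lintegral_prod_right'
    fun x y => ?_
  exact hν _ _ _ (hf.comp measurable_prodMk_left) (hg.comp measurable_prodMk_left)
    (hh.comp measurable_prodMk_left) fun x' y' => H (x, x') (y, y')

theorem of_measurePreserving {E F : Type*} [AddCommGroup E] [Module ℝ E] [MeasurableSpace E]
    [AddCommGroup F] [Module ℝ F] [MeasurableSpace F]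
    {μ : Measure E} {ν : Measure F} {l : ℝ} (hμ : PrekopaLeindler μ l) (e : E →ₗ[ℝ] F)
    (he : MeasurePreserving e μ ν) : PrekopaLeindler ν l := by
  intro f g h hf hg hh H
  rw [← he.lintegral_comp hf, ← he.lintegral_comp hg, ← he.lintegral_comp hh]
  refine hμ _ _ _ (hf.comp he.measurable) (hg.comp he.measurable) (hh.comp he.measurable)
    fun x y => ?_
  simpa using H (e x) (e y)

protected theorem pi {l : ℝ} (h0 : 0 < l) (h1 : l < 1) (n : ℕ) :
    PrekopaLeindler (volume : Measure (Fin n → ℝ)) l := by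
  induction n with
  | zero =>
    intro f g h hf hg hh H
    have key := H default default
    rw [Subsingleton.elim ((1 - l) • _ + l • _) (default : Fin 0 → ℝ)] at key
    simpa [Measure.volume_pi_eq_dirac (default : Fin 0 → ℝ)] using key
  | succ n ih =>
    refine ((PrekopaLeindler.real h0 h1).prod ih).of_measurePreserving
      (Fin.consLinearEquiv ℝ (fun _ : Fin (n + 1) => ℝ)).toLinearMap ?_
    have hcoe : ⇑(Fin.consLinearEquiv ℝ (fun _ : Fin (n + 1) => ℝ)).toLinearMap =
        ⇑(MeasurableEquiv.piFinSuccAbove (fun _ : Fin (n + 1) => ℝ) 0).symm := by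
      ext x i
      simp [MeasurableEquiv.piFinSuccAbove]
    rw [hcoe]
    exact (volume_preserving_piFinSuccAbove (fun _ : Fin (n + 1) => ℝ) 0).symm

protected theorem euclideanSpace {l : ℝ} (h0 : 0 < l) (h1 : l < 1) (n : ℕ) :
    PrekopaLeindler (volume : Measure (EuclideanSpace ℝ (Fin n))) l :=
  (PrekopaLeindler.pi h0 h1 n).of_measurePreserving
    (WithLp.linearEquiv 2 ℝ (Fin n → ℝ)).symm.toLinearMap
    (EuclideanSpace.volume_preserving_symm_measurableEquiv_toLp (Fin n)).symm

/-- The multiplicative Brunn–Minkowski inequality. -/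
theorem measure_rpow_mul_le {E : Type*} [AddCommGroup E] [Module ℝ E] [MeasurableSpace E]
    {μ : Measure E} {l : ℝ} (hμ : PrekopaLeindler μ l) (h0 : 0 < l) (h1 : l < 1) {A B C : Set E}
    (hA : MeasurableSet A) (hB : MeasurableSet B) (hC : MeasurableSet C)
    (H : ∀ x ∈ A, ∀ y ∈ B, (1 - l) • x + l • y ∈ C) :
    μ A ^ (1 - l) * μ B ^ l ≤ μ C := by
  have h1' : 0 < 1 - l := sub_pos.2 h1
  simpa [lintegral_indicator_one, hA, hB, hC] using
    hμ (A.indicator 1) (B.indicator 1) (C.indicator 1) (measurable_one.indicator hA)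
      (measurable_one.indicator hB) (measurable_one.indicator hC) fun x y => by
      by_cases hx : x ∈ A
      · by_cases hy : y ∈ B
        · simp [hx, hy, H x hx y hy]
        · simp [hy, h0]
      · simp [hx, h1]

end PrekopaLeindler

/-- A monotone log-concave function with values in `[0, 1]` which attains `0` and `1` is
expanding, up to a constant, wherever its values stay away from `0` and `1`. -/
theorem exists_pos_mul_sub_le_of_logConcave {H : ℝ → ℝ} (hmono : Monotone H) {S T : ℝ}
    (hS : H S = 0) (hT : H T = 1)
    (hlog : ∀ l ∈ Ioo (0 : ℝ) 1, ∀ x y, H x ^ (1 - l) * H y ^ l ≤ H ((1 - l) * x + l * y))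
    {η : ℝ} (hη : 0 < η) :
    ∃ c > 0, ∀ x y, x < y → η ≤ H x → H y ≤ 1 - η → c * (y - x) ≤ H y - H x := by
  have hST : S < T := by
    by_contra! h
    linarith [hmono h]
  refine ⟨η ^ 2 / (T - S), by have := sub_pos.2 hST; positivity, fun x y hxy hx hy => ?_⟩
  have hyT : y < T := by
    by_contra! h
    linarith [hmono h]
  have hSx : S < x := by
    by_contra! h
    linarith [hmono h]
  have hxT : 0 < T - x := by linarith
  set l := (y - x) / (T - x) with hl
  have hl0 : 0 < l := div_pos (sub_pos.2 hxy) hxT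
  have hl1 : l < 1 := (div_lt_one hxT).2 (by linarith)
  have hHx : 0 < H x := hη.trans_le hx
  have hle := hlog l ⟨hl0, hl1⟩ x T
  have hpt : (1 - l) * x + l * T = y := by
    rw [hl]; field_simp; ring
  rw [hpt, hT, Real.one_rpow, mul_one] at hle
  have h1 : H x ^ (1 - l) = H x * Real.exp (-l * Real.log (H x)) := by
    rw [Real.rpow_def_of_pos hHx]
    conv_rhs => rw [← Real.exp_log hHx, ← Real.exp_add, Real.log_exp]
    ring_nf
  have h2 := Real.add_one_le_exp (-l * Real.log (H x))
  have h3 := Real.log_le_sub_one_of_pos hHx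
  have h4 : H x ≤ 1 - η := (hmono hxy.le).trans hy
  have h5 : H x * (1 + l * η) ≤ H y := by
    refine le_trans ?_ hle
    rw [h1]
    refine mul_le_mul_of_nonneg_left ?_ hHx.le
    nlinarith
  have h6 : l * η ^ 2 ≤ H y - H x := by
    nlinarith [mul_le_mul_of_nonneg_right hx (mul_pos hl0 hη).le]
  refine le_trans ?_ h6
  rw [hl, div_mul_eq_mul_div, div_mul_eq_mul_div, mul_comm (η ^ 2)]
  exact div_le_div_of_nonneg_left (mul_nonneg (by linarith) (by positivity)) hxT (by linarith)

/-- If `p` and `1 - p` dominate the geometric means of `s, t` and `1 - s, 1 - t`, then `p` is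
quadratically close to the arithmetic mean of `s` and `t`. -/
theorem abs_sub_midpoint_le {η s t p : ℝ} (hη : 0 < η) (hs : s ∈ Icc η (1 - η))
    (ht : t ∈ Icc η (1 - η)) (hp0 : 0 ≤ p) (hp1 : p ≤ 1) (h1 : s * t ≤ p ^ 2)
    (h2 : (1 - s) * (1 - t) ≤ (1 - p) ^ 2) :
    p ∈ Icc η (1 - η) ∧ |p - (s + t) / 2| ≤ (s - t) ^ 2 / (8 * η) := by
  obtain ⟨hs1, hs2⟩ := hs
  obtain ⟨ht1, ht2⟩ := ht
  have hpη : η ≤ p := by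
    refine le_of_sq_le_sq ?_ hp0
    nlinarith
  have hpη' : η ≤ 1 - p := by
    refine le_of_sq_le_sq ?_ (by linarith)
    nlinarith
  refine ⟨⟨hpη, by linarith⟩, ?_⟩
  rw [le_div_iff₀ (by positivity), abs_sub_comm]
  rcases le_total p ((s + t) / 2) with h | h
  · rw [abs_of_nonneg (by linarith)]
    nlinarith
  · rw [abs_of_nonpos (by linarith)]
    nlinarith

theorem exists_eq_translate_of_geom_mean_le {F G H : ℝ → ℝ} (hF : Monotone F) (hG : Monotone G)
    (hF01 : ∀ x, F x ∈ Icc 0 1) (hG01 : ∀ x, G x ∈ Icc 0 1) (hH01 : ∀ x, H x ∈ Icc 0 1)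
    (hFs : Ioo 0 1 ⊆ range F) (hGs : Ioo 0 1 ⊆ range G)
    (h1 : ∀ x y, F x * G y ≤ H ((x + y) / 2) ^ 2)
    (h2 : ∀ x y, (1 - F x) * (1 - G y) ≤ (1 - H ((x + y) / 2)) ^ 2)
    (h3 : ∀ η > 0, ∃ c > 0, ∀ x y, x < y → η ≤ H x → H y ≤ 1 - η → c * (y - x) ≤ H y - H x) :
    ∃ r, ∀ x, F (x + r) = G x := by
  have hhalf : (1 / 2 : ℝ) ∈ Ioo (0 : ℝ) 1 := by norm_num
  have bound : ∀ η > 0, ∃ C, ∀ x y x' y', F x = G y → F x' = G y' → F x ∈ Icc η (1 - η) →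
      F x' ∈ Icc η (1 - η) → |(x - y) - (x' - y')| ≤ C * (F x - F x') ^ 2 := by
    intro η hη
    obtain ⟨c, hc, hcH⟩ := h3 η hη
    refine ⟨1 / (2 * η * c), fun x y x' y' e e' hx hx' => ?_⟩
    obtain ⟨p1, p2⟩ := abs_sub_midpoint_le hη hx hx' (hH01 ((x + y') / 2)).1
      (hH01 ((x + y') / 2)).2 (by rw [e']; exact h1 x y') (by rw [e']; exact h2 x y')
    obtain ⟨q1, q2⟩ := abs_sub_midpoint_le hη hx' hx (hH01 ((x' + y) / 2)).1
      (hH01 ((x' + y) / 2)).2 (by rw [e]; exact h1 x' y) (by rw [e]; exact h2 x' y)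
    have hpq : |H ((x + y') / 2) - H ((x' + y) / 2)| ≤ (F x - F x') ^ 2 / (4 * η) := by
      have e1 : (F x' - F x) ^ 2 / (8 * η) = (F x - F x') ^ 2 / (8 * η) := by ring
      have e2 : (F x - F x') ^ 2 / (4 * η) = 2 * ((F x - F x') ^ 2 / (8 * η)) := by
        field_simp; ring
      rw [e1] at q2
      rw [e2]
      rw [abs_le] at p2 q2 ⊢
      constructor <;> linarith
    have hz : c * |(x + y') / 2 - (x' + y) / 2| ≤ |H ((x + y') / 2) - H ((x' + y) / 2)| := by
      rcases lt_trichotomy ((x + y') / 2) ((x' + y) / 2) with h | h | h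
      · rw [abs_sub_comm, abs_of_pos (sub_pos.2 h), abs_sub_comm]
        exact (hcH _ _ h p1.1 q1.2).trans (le_abs_self _)
      · simp [h]
      · rw [abs_of_pos (sub_pos.2 h)]
        exact (hcH _ _ h q1.1 p1.2).trans (le_abs_self _)
    have hxy : (x - y) - (x' - y') = 2 * ((x + y') / 2 - (x' + y) / 2) := by ring
    rw [hxy, abs_mul, abs_two]
    have := hz.trans hpq
    calc 2 * |(x + y') / 2 - (x' + y) / 2|
        = 2 / c * (c * |(x + y') / 2 - (x' + y) / 2|) := by field_simp
      _ ≤ 2 / c * ((F x - F x') ^ 2 / (4 * η)) := by gcongr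
      _ = 1 / (2 * η * c) * (F x - F x') ^ 2 := by field_simp; ring
  have const : ∀ x y x' y', F x = G y → F x' = G y' → F x ∈ Ioo 0 1 → F x' ∈ Ioo 0 1 →
      x - y = x' - y' := by
    intro x y x' y' e e' hx hx'
    obtain ⟨η, hη, hxη, hxη'⟩ : ∃ η > 0, F x ∈ Icc η (1 - η) ∧ F x' ∈ Icc η (1 - η) := by
      have hle : ∀ a b : ℝ, min a b ≤ a ∧ min a b ≤ b := fun a b =>
        ⟨min_le_left _ _, min_le_right _ _⟩
      have l1 := hle (F x) (1 - F x)
      have l2 := hle (F x') (1 - F x')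
      have l3 := hle (min (F x) (1 - F x)) (min (F x') (1 - F x'))
      refine ⟨min (min (F x) (1 - F x)) (min (F x') (1 - F x')), ?_, ⟨?_, ?_⟩, ?_, ?_⟩
      · simp only [gt_iff_lt, lt_min_iff, sub_pos]
        exact ⟨hx, hx'⟩
      all_goals linarith
    obtain ⟨C, hC⟩ := bound η hη
    have halving : ∀ k : ℕ, ∀ x y x' y', F x = G y → F x' = G y' → F x ∈ Icc η (1 - η) →
        F x' ∈ Icc η (1 - η) → |(x - y) - (x' - y')| ≤ C * (F x - F x') ^ 2 * (1 / 2) ^ k := by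
      intro k
      induction k with
      | zero => simpa using hC
      | succ k ih =>
        intro x y x' y' e e' hx hx'
        have hm : (F x + F x') / 2 ∈ Icc η (1 - η) :=
          ⟨by linarith [hx.1, hx'.1], by linarith [hx.2, hx'.2]⟩
        have hm' : (F x + F x') / 2 ∈ Ioo (0 : ℝ) 1 :=
          ⟨by linarith [hm.1], by linarith [hm.2]⟩
        obtain ⟨z, hz⟩ := hFs hm'
        obtain ⟨z', hz'⟩ := hGs hm'
        have i1 := ih x y z z' e (hz.trans hz'.symm) hx (hz ▸ hm)
        have i2 := ih z z' x' y' (hz.trans hz'.symm) e' (hz ▸ hm) hx'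
        calc |(x - y) - (x' - y')| ≤ |(x - y) - (z - z')| + |(z - z') - (x' - y')| :=
              abs_sub_le _ _ _
          _ ≤ _ := add_le_add i1 i2
          _ = _ := by rw [hz]; ring
    have hlim : Filter.Tendsto (fun k : ℕ => C * (F x - F x') ^ 2 * (1 / 2 : ℝ) ^ k)
        Filter.atTop (nhds (C * (F x - F x') ^ 2 * 0)) :=
      (tendsto_pow_atTop_nhds_zero_of_lt_one (by norm_num) (by norm_num)).const_mul _
    have := ge_of_tendsto' hlim fun k => halving k x y x' y' e e' hxη hxη'
    rw [mul_zero, abs_nonpos_iff] at this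
    linarith
  obtain ⟨x₀, hx₀⟩ := hFs hhalf
  obtain ⟨y₀, hy₀⟩ := hGs hhalf
  have shift : ∀ x y, F x = G y → F x ∈ Ioo 0 1 → x = y + (x₀ - y₀) := fun x y e hx => by
    linarith [const x y x₀ y₀ e (hx₀.trans hy₀.symm) hx (hx₀ ▸ hhalf)]
  refine ⟨x₀ - y₀, fun y => ?_⟩
  by_cases hy : G y ∈ Ioo 0 1
  · obtain ⟨x, hx⟩ := hFs hy
    rw [← shift x y hx (hx ▸ hy), hx]
  by_cases hx : F (y + (x₀ - y₀)) ∈ Ioo 0 1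
  · obtain ⟨y', hy'⟩ := hGs hx
    have := shift _ y' hy'.symm hx
    rw [← hy', show y = y' by linarith]
  rw [mem_Ioo, not_and, not_lt] at hx hy
  have hle : ∀ z, y₀ ≤ z ↔ x₀ ≤ z + (x₀ - y₀) := fun z => by
    constructor <;> intro <;> linarith
  rcases le_total y₀ y with h | h
  · have h4 := hG h
    have h5 := hF ((hle y).1 h)
    have h6 := hx (by linarith)
    have h7 := hy (by linarith)
    linarith [(hF01 (y + (x₀ - y₀))).2, (hG01 y).2]
  · have h4 := hG h
    have h5 : F (y + (x₀ - y₀)) ≤ F x₀ := hF (by linarith)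
    have h6 : ¬ 0 < F (y + (x₀ - y₀)) := fun h0 => by linarith [hx h0]
    have h7 : ¬ 0 < G y := fun h0 => by linarith [hy h0]
    linarith [(hF01 (y + (x₀ - y₀))).1, (hG01 y).1]

section Sections

variable {n : ℕ}

local notation "𝔼" => EuclideanSpace ℝ (Fin n)

/-- The distribution of the linear functional `u` on a uniformly distributed point of `A`. -/
noncomputable def sectionLaw (A : Set (EuclideanSpace ℝ (Fin n)))
    (u : EuclideanSpace ℝ (Fin n) →L[ℝ] ℝ) : Measure ℝ :=
  (ProbabilityTheory.cond volume A).map u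

theorem isProbabilityMeasure_sectionLaw {A : Set 𝔼} (hA0 : volume A ≠ 0) (hAt : volume A ≠ ∞)
    (u : 𝔼 →L[ℝ] ℝ) : IsProbabilityMeasure (sectionLaw A u) := by
  have := ProbabilityTheory.cond_isProbabilityMeasure_of_finite hA0 hAt
  exact Measure.isProbabilityMeasure_map u.continuous.aemeasurable

theorem sectionLaw_apply {A : Set 𝔼} (hA : MeasurableSet A) (u : 𝔼 →L[ℝ] ℝ) {S : Set ℝ}
    (hS : MeasurableSet S) : sectionLaw A u S = (volume A)⁻¹ * volume (A ∩ u ⁻¹' S) := by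
  rw [sectionLaw, Measure.map_apply u.continuous.measurable hS, ProbabilityTheory.cond_apply hA]

theorem nullSingletonClass_sectionLaw {A : Set 𝔼} (hA : MeasurableSet A) {u : 𝔼 →L[ℝ] ℝ}
    (hu : u ≠ 0) : NullSingletonClass (sectionLaw A u) := by
  refine ⟨fun s => ?_⟩
  have hsurj : Function.Surjective u.toLinearMap :=
    LinearMap.surjective fun h => hu (ContinuousLinearMap.coe_injective h)
  obtain ⟨c, -, hc⟩ := u.toLinearMap.exists_map_addHaar_eq_smul_addHaar
    (volume : Measure 𝔼) (volume : Measure ℝ) hsurj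
  have hnull : volume (u ⁻¹' {s}) = 0 := by
    have := congrArg (fun m : Measure ℝ => m {s}) hc
    simpa [Measure.map_apply u.continuous.measurable (measurableSet_singleton s)] using this
  rw [sectionLaw_apply hA u (measurableSet_singleton s),
    measure_mono_null inter_subset_right hnull, mul_zero]

theorem continuous_cdf_of_nullSingletonClass (ν : Measure ℝ) [IsProbabilityMeasure ν]
    [NullSingletonClass ν] : Continuous (ProbabilityTheory.cdf ν) := by
  refine continuous_iff_continuousAt.2 fun x => ?_
  have hmono := ProbabilityTheory.monotone_cdf ν
  rw [hmono.continuousAt_iff_leftLim_eq_rightLim, StieltjesFunction.rightLim_eq]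
  have h := (ProbabilityTheory.cdf ν).measure_singleton x
  rw [ProbabilityTheory.measure_cdf, measure_singleton, eq_comm, ENNReal.ofReal_eq_zero] at h
  exact le_antisymm (hmono.leftLim_le le_rfl) (by linarith)

theorem Ioo_subset_range_cdf (ν : Measure ℝ) [IsProbabilityMeasure ν] [NullSingletonClass ν] :
    Ioo 0 1 ⊆ range (ProbabilityTheory.cdf ν) := fun τ hτ => by
  obtain ⟨x, hx⟩ := ((ProbabilityTheory.tendsto_cdf_atBot ν).eventually_lt_const hτ.1).exists
  obtain ⟨y, hy⟩ := ((ProbabilityTheory.tendsto_cdf_atTop ν).eventually_const_lt hτ.2).exists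
  exact mem_range_of_exists_le_of_exists_ge (continuous_cdf_of_nullSingletonClass ν)
    ⟨x, hx.le⟩ ⟨y, hy.le⟩

theorem sectionLaw_real_rpow_mul_le {l : ℝ} (h0 : 0 < l) (h1 : l < 1) {A B D : Set 𝔼}
    (hA : MeasurableSet A) (hB : MeasurableSet B) (hD : MeasurableSet D)
    (hA0 : volume A ≠ 0) (hAt : volume A ≠ ∞) (hAB : volume B = volume A)
    (hAD : volume D = volume A) (hmid : ∀ x ∈ A, ∀ y ∈ B, (1 - l) • x + l • y ∈ D)
    (u : 𝔼 →L[ℝ] ℝ) {S T U : Set ℝ} (hS : MeasurableSet S) (hT : MeasurableSet T)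
    (hU : MeasurableSet U) (hSTU : ∀ s ∈ S, ∀ t ∈ T, (1 - l) * s + l * t ∈ U) :
    (sectionLaw A u).real S ^ (1 - l) * (sectionLaw B u).real T ^ l ≤
      (sectionLaw D u).real U := by
  have h1' : 0 < 1 - l := sub_pos.2 h1
  have := isProbabilityMeasure_sectionLaw (hAD ▸ hA0) (hAD ▸ hAt) u
  have hu := u.continuous.measurable
  have key := (PrekopaLeindler.euclideanSpace h0 h1 n).measure_rpow_mul_le h0 h1
    (hA.inter (hu hS)) (hB.inter (hu hT)) (hD.inter (hu hU)) (fun x hx y hy =>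
      ⟨hmid x hx.1 y hy.1, by simpa using hSTU _ hx.2 _ hy.2⟩)
  have key' : sectionLaw A u S ^ (1 - l) * sectionLaw B u T ^ l ≤ sectionLaw D u U := by
    rw [sectionLaw_apply hA u hS, sectionLaw_apply hB u hT, sectionLaw_apply hD u hU, hAB, hAD,
      ENNReal.mul_rpow_of_nonneg _ _ h1'.le, ENNReal.mul_rpow_of_nonneg _ _ h0.le,
      mul_mul_mul_comm, ← ENNReal.rpow_add _ _ (ENNReal.inv_ne_zero.2 hAt)
        (ENNReal.inv_ne_top.2 hA0), sub_add_cancel, ENNReal.rpow_one]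
    gcongr
  simp only [measureReal_def]
  rw [ENNReal.toReal_rpow, ENNReal.toReal_rpow, ← ENNReal.toReal_mul]
  exact ENNReal.toReal_mono (measure_ne_top _ _) key'

theorem exists_cdf_sectionLaw_translate {A B D : Set 𝔼}
    (hA : MeasurableSet A) (hB : MeasurableSet B) (hD : IsCompact D) (hDc : Convex ℝ D)
    (hA0 : volume A ≠ 0) (hAt : volume A ≠ ∞) (hAB : volume B = volume A)
    (hAD : volume D = volume A)
    (hmid : ∀ x ∈ A, ∀ y ∈ B, (1 / 2 : ℝ) • x + (1 / 2 : ℝ) • y ∈ D)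
    {u : 𝔼 →L[ℝ] ℝ} (hu : u ≠ 0) :
    ∃ r, ∀ s, ProbabilityTheory.cdf (sectionLaw A u) (s + r) =
      ProbabilityTheory.cdf (sectionLaw B u) s := by
  have := isProbabilityMeasure_sectionLaw hA0 hAt u
  have := isProbabilityMeasure_sectionLaw (hAB ▸ hA0) (hAB ▸ hAt) u
  have := isProbabilityMeasure_sectionLaw (hAD ▸ hA0) (hAD ▸ hAt) u
  have := nullSingletonClass_sectionLaw hA hu
  have := nullSingletonClass_sectionLaw hB hu
  have hmem : ∀ (ν : Measure ℝ) (x : ℝ), ProbabilityTheory.cdf ν x ∈ Icc 0 1 := fun ν x =>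
    ⟨ProbabilityTheory.cdf_nonneg ν x, ProbabilityTheory.cdf_le_one ν x⟩
  have compl : ∀ (ν : Measure ℝ) [IsProbabilityMeasure ν] (x : ℝ),
      1 - ProbabilityTheory.cdf ν x = ν.real (Ioi x) := fun ν _ x => by
    rw [ProbabilityTheory.cdf_eq_real, ← compl_Iic, probReal_compl_eq_one_sub measurableSet_Iic]
  have sq_le : ∀ a b c : ℝ, 0 ≤ a → 0 ≤ b → a ^ (1 - 1 / 2 : ℝ) * b ^ (1 / 2 : ℝ) ≤ c →
      a * b ≤ c ^ 2 := by
    intro a b c ha hb h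
    rw [show (1 - 1 / 2 : ℝ) = 1 / 2 by norm_num, ← Real.sqrt_eq_rpow, ← Real.sqrt_eq_rpow] at h
    calc a * b = (√a * √b) ^ 2 := by rw [mul_pow, Real.sq_sqrt ha, Real.sq_sqrt hb]
      _ ≤ c ^ 2 := by gcongr
  have hmid' : ∀ x ∈ A, ∀ y ∈ B, (1 - 1 / 2 : ℝ) • x + (1 / 2 : ℝ) • y ∈ D := by
    intro x hx y hy
    rw [show (1 - 1 / 2 : ℝ) = 1 / 2 by norm_num]
    exact hmid x hx y hy
  refine exists_eq_translate_of_geom_mean_le (H := ProbabilityTheory.cdf (sectionLaw D u))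
    (ProbabilityTheory.monotone_cdf _)
    (ProbabilityTheory.monotone_cdf _) (hmem _) (hmem _) (hmem _) (Ioo_subset_range_cdf _)
    (Ioo_subset_range_cdf _) (fun x y => ?_) (fun x y => ?_) fun η hη => ?_
  · refine sq_le _ _ _ (hmem _ _).1 (hmem _ _).1 ?_
    simp only [ProbabilityTheory.cdf_eq_real]
    refine sectionLaw_real_rpow_mul_le (by norm_num) (by norm_num) hA hB hD.measurableSet hA0 hAt
      hAB hAD hmid' u measurableSet_Iic measurableSet_Iic measurableSet_Iic fun s hs t ht => ?_
    simp only [mem_Iic] at hs ht ⊢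
    linarith
  · simp only [compl]
    refine sq_le _ _ _ measureReal_nonneg measureReal_nonneg ?_
    refine sectionLaw_real_rpow_mul_le (by norm_num) (by norm_num) hA hB hD.measurableSet hA0 hAt
      hAB hAD hmid' u measurableSet_Ioi measurableSet_Ioi measurableSet_Ioi fun s hs t ht => ?_
    simp only [mem_Ioi] at hs ht ⊢
    linarith
  · obtain ⟨R, hR⟩ := (hD.image u.continuous).isBounded.subset_closedBall 0
    have hR' : ∀ x ∈ D, |u x| ≤ R := fun x hx => by
      simpa using hR (mem_image_of_mem u hx)
    refine exists_pos_mul_sub_le_of_logConcave (ProbabilityTheory.monotone_cdf _)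
      (S := -R - 1) (T := R) ?_ ?_ (fun l hl x y => ?_) hη
    · rw [ProbabilityTheory.cdf_eq_real, measureReal_def,
        sectionLaw_apply hD.measurableSet u measurableSet_Iic]
      have : D ∩ u ⁻¹' Iic (-R - 1) = ∅ := by
        ext x
        simp only [mem_inter_iff, mem_preimage, mem_Iic, mem_empty_iff_false, iff_false, not_and]
        intro hx
        linarith [neg_le_of_abs_le (hR' x hx)]
      simp [this]
    · rw [ProbabilityTheory.cdf_eq_real, measureReal_def,
        sectionLaw_apply hD.measurableSet u measurableSet_Iic,
        inter_eq_self_of_subset_left (t := u ⁻¹' Iic R)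
          fun x hx => (le_abs_self _).trans (hR' x hx),
        ENNReal.inv_mul_cancel (hAD ▸ hA0) (hAD ▸ hAt), ENNReal.toReal_one]
    · simp only [ProbabilityTheory.cdf_eq_real]
      refine sectionLaw_real_rpow_mul_le hl.1 hl.2 hD.measurableSet hD.measurableSet
        hD.measurableSet (hAD ▸ hA0) (hAD ▸ hAt) rfl rfl (fun x hx y hy =>
          hDc hx hy (sub_nonneg.2 hl.2.le) hl.1.le (by ring)) u measurableSet_Iic
        measurableSet_Iic measurableSet_Iic fun s hs t ht => ?_
      have h1 : 0 ≤ 1 - l := sub_nonneg.2 hl.2.le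
      have h0 := hl.1.le
      simp only [mem_Iic] at hs ht ⊢
      gcongr

theorem integrable_id_cond {A : Set 𝔼} (hA : IsCompact A) (hA0 : volume A ≠ 0) :
    Integrable (fun x => x) (ProbabilityTheory.cond volume A) :=
  (continuous_id.continuousOn.integrableOn_compact hA).smul_measure (ENNReal.inv_ne_top.2 hA0)

/-- The distributions of a linear functional on `A` and `B` are translates of each other by the
value of the functional at the difference of the centroids. -/
theorem cdf_sectionLaw_add_centroid {A B D : Set 𝔼}
    (hA : IsCompact A) (hB : IsCompact B) (hD : IsCompact D) (hDc : Convex ℝ D)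
    (hA0 : volume A ≠ 0) (hAB : volume B = volume A) (hAD : volume D = volume A)
    (hmid : ∀ x ∈ A, ∀ y ∈ B, (1 / 2 : ℝ) • x + (1 / 2 : ℝ) • y ∈ D)
    {u : 𝔼 →L[ℝ] ℝ} (hu : u ≠ 0) (s : ℝ) :
    ProbabilityTheory.cdf (sectionLaw A u)
        (s + u (∫ x, x ∂ProbabilityTheory.cond volume A - ∫ x, x ∂ProbabilityTheory.cond volume B))
      = ProbabilityTheory.cdf (sectionLaw B u) s := by
  have hAt := hA.measure_ne_top (μ := (volume : Measure 𝔼))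
  obtain ⟨r, hr⟩ := exists_cdf_sectionLaw_translate hA.measurableSet hB.measurableSet hD hDc
    hA0 hAt hAB hAD hmid hu
  have := isProbabilityMeasure_sectionLaw hA0 hAt u
  have := isProbabilityMeasure_sectionLaw (hAB ▸ hA0) (hAB ▸ hAt) u
  have hmean : ∀ {S : Set 𝔼}, IsCompact S → volume S ≠ 0 →
      u (∫ x, x ∂ProbabilityTheory.cond volume S) = ∫ t, t ∂sectionLaw S u := fun hS hS0 => by
    rw [sectionLaw, integral_map u.continuous.aemeasurable measurable_id'.aestronglyMeasurable,
      ← u.integral_comp_comm (integrable_id_cond hS hS0)]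
  have hint : Integrable (fun t => t) (sectionLaw B u) := by
    rw [sectionLaw, integrable_map_measure measurable_id'.aestronglyMeasurable
      u.continuous.aemeasurable]
    exact u.integrable_comp (integrable_id_cond hB (hAB ▸ hA0))
  have hmap : sectionLaw A u = (sectionLaw B u).map (· + r) := by
    have := Measure.isProbabilityMeasure_map (μ := sectionLaw B u) (f := (· + r))
      (measurable_add_const r).aemeasurable
    refine Measure.eq_of_cdf _ _ (StieltjesFunction.ext fun x => ?_)
    have h := hr (x - r)
    rw [sub_add_cancel] at h
    rw [h, ProbabilityTheory.cdf_eq_real, ProbabilityTheory.cdf_eq_real,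
      map_measureReal_apply (measurable_add_const r) measurableSet_Iic]
    congr 1
    ext t
    simp [le_sub_iff_add_le]
  have hr' : u (∫ x, x ∂ProbabilityTheory.cond volume A -
      ∫ x, x ∂ProbabilityTheory.cond volume B) = r := by
    rw [map_sub, hmean hA hA0, hmean hB (hAB ▸ hA0), hmap,
      integral_map (measurable_add_const r).aemeasurable measurable_id'.aestronglyMeasurable,
      integral_add hint (integrable_const r)]
    simp
  rw [hr', hr]

end Sections

section ConvexBodies

variable {E : Type*} [NormedAddCommGroup E] [NormedSpace ℝ E] [MeasurableSpace E] [BorelSpace E]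
  [FiniteDimensional ℝ E] (μ : Measure E) [μ.IsAddHaarMeasure]

theorem Convex.interior_nonempty_of_measure_ne_zero {s : Set E} (hs : Convex ℝ s)
    (h0 : μ s ≠ 0) : (interior s).Nonempty := by
  by_contra! h
  refine h0 (measure_mono_null ?_ (hs.addHaar_frontier μ))
  rw [frontier, h, sdiff_empty]
  exact subset_closure

theorem Convex.measure_inter_ne_zero {s O : Set E} (hs : Convex ℝ s) (h0 : μ s ≠ 0)
    (hO : IsOpen O) (hne : (s ∩ O).Nonempty) : μ (s ∩ O) ≠ 0 := by
  obtain ⟨x, hx, hxO⟩ := hne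
  have hcl : x ∈ closure (interior s) := by
    rw [hs.closure_interior_eq_closure_of_nonempty_interior
      (hs.interior_nonempty_of_measure_ne_zero μ h0)]
    exact subset_closure hx
  obtain ⟨y, hyO, hys⟩ := mem_closure_iff.1 hcl O hO hxO
  have hpos : 0 < μ (interior s ∩ O) := (isOpen_interior.inter hO).measure_pos μ ⟨y, hys, hyO⟩
  exact (hpos.trans_le (measure_mono (inter_subset_inter_left _ interior_subset))).ne'

theorem Convex.eq_of_subset_of_measure_eq {s t : Set E} (ht : IsClosed t) (hs : Convex ℝ s)
    (hts : t ⊆ s) (h : μ t = μ s) (h0 : μ s ≠ 0) (hfin : μ s ≠ ∞) : t = s := by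
  refine hts.antisymm fun x hx => ?_
  by_contra hxt
  refine hs.measure_inter_ne_zero μ h0 ht.isOpen_compl ⟨x, hx, hxt⟩ ?_
  rw [← sdiff_eq, measure_sdiff hts ht.measurableSet.nullMeasurableSet (h ▸ hfin), h, tsub_self]

/-- A convex set of positive finite measure is bounded. -/
theorem Convex.isBounded_of_measure_ne_top {s : Set E} (hs : Convex ℝ s) (h0 : μ s ≠ 0)
    (hfin : μ s ≠ ∞) : Bornology.IsBounded s := by
  obtain ⟨p, hp⟩ := hs.interior_nonempty_of_measure_ne_zero μ h0
  obtain ⟨r, hr, hball⟩ := Metric.isOpen_iff.1 isOpen_interior p hp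
  replace hball := hball.trans interior_subset
  have hr2 : 0 < r / 2 := half_pos hr
  have hb0 : μ (Metric.ball (0 : E) (r / 2)) ≠ 0 := (Metric.measure_ball_pos μ _ hr2).ne'
  obtain ⟨N, hN⟩ := ENNReal.exists_nat_mul_gt hb0 hfin
  refine Metric.isBounded_iff_subset_closedBall p |>.2 ⟨2 * (N + 1) * r, fun x hx => ?_⟩
  by_contra hfar
  rw [Metric.mem_closedBall, not_le, dist_eq_norm] at hfar
  have hN1 : (0 : ℝ) < 2 * (N + 1) := by positivity
  -- `N` disjoint balls of radius `r / 2` centred on the first half of the segment from `p` to `x`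
  let c : ℕ → E := fun k => p + (k / (2 * (N + 1)) : ℝ) • (x - p)
  have hsub : ∀ k ∈ Finset.range N, Metric.ball (c k) (r / 2) ⊆ s := by
    intro k hk y hy
    have hkN : (k : ℝ) < N := by exact_mod_cast Finset.mem_range.1 hk
    set θ : ℝ := k / (2 * (N + 1)) with hθ
    have hθ0 : 0 ≤ θ := by positivity
    have hθ1 : θ ≤ 1 / 2 := by
      rw [hθ, div_le_iff₀ hN1]; linarith
    have hθ' : 0 < 1 - θ := by linarith
    have hz : p + (1 - θ)⁻¹ • (y - c k) ∈ s := by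
      refine hball ?_
      rw [Metric.mem_ball, dist_eq_norm, add_sub_cancel_left, norm_smul, norm_inv,
        Real.norm_of_nonneg hθ'.le, inv_mul_lt_iff₀ hθ']
      rw [Metric.mem_ball, dist_eq_norm] at hy
      nlinarith
    have hy' : y = (1 - θ) • (p + (1 - θ)⁻¹ • (y - c k)) + θ • x := by
      rw [smul_add, smul_inv_smul₀ hθ'.ne']
      simp only [c, ← hθ]
      module
    rw [hy']
    exact hs hz hx hθ'.le hθ0 (by ring)
  have hdisj : (Finset.range N : Set ℕ).PairwiseDisjoint fun k => Metric.ball (c k) (r / 2) := by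
    intro j _ k _ hjk
    refine Metric.ball_disjoint_ball ?_
    have hd : c j - c k = (((j : ℝ) - k) / (2 * (N + 1))) • (x - p) := by
      simp only [c]; module
    have hjk1 : (1 : ℝ) ≤ |(j : ℝ) - k| := by
      have : (1 : ℤ) ≤ |(j : ℤ) - k| := Int.one_le_abs (by omega)
      exact_mod_cast this
    rw [dist_eq_norm, hd, norm_smul, norm_div, Real.norm_of_nonneg hN1.le, Real.norm_eq_abs,
      add_halves, div_mul_eq_mul_div, le_div_iff₀ hN1]
    nlinarith [norm_nonneg (x - p)]
  have hle : (N : ℝ≥0∞) * μ (Metric.ball (0 : E) (r / 2)) ≤ μ s := by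
    calc (N : ℝ≥0∞) * μ (Metric.ball (0 : E) (r / 2))
        = ∑ k ∈ Finset.range N, μ (Metric.ball (c k) (r / 2)) := by
          simp [Measure.addHaar_ball_center μ _ (r / 2)]
      _ = μ (⋃ k ∈ Finset.range N, Metric.ball (c k) (r / 2)) :=
          (measure_biUnion_finset hdisj fun _ _ => measurableSet_ball).symm
      _ ≤ μ s := measure_mono (iUnion₂_subset hsub)
  exact absurd hN hle.not_gt

end ConvexBodies

/-- The equality case of the Brunn–Minkowski inequality for convex bodies of equal volume. -/
theorem exists_vadd_eq_of_midpoint_volume_eq {n : ℕ} {A B D : Set (EuclideanSpace ℝ (Fin n))}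
    (hA : IsCompact A) (hB : IsCompact B) (hD : IsCompact D)
    (hAc : Convex ℝ A) (hBc : Convex ℝ B) (hDc : Convex ℝ D)
    (hA0 : volume A ≠ 0) (hAB : volume B = volume A) (hAD : volume D = volume A)
    (hmid : ∀ x ∈ A, ∀ y ∈ B, (1 / 2 : ℝ) • x + (1 / 2 : ℝ) • y ∈ D) :
    ∃ v : EuclideanSpace ℝ (Fin n), A = v +ᵥ B := by
  have hAt := hA.measure_ne_top (μ := (volume : Measure (EuclideanSpace ℝ (Fin n))))
  have hB0 : volume B ≠ 0 := hAB ▸ hA0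
  have hBt : volume B ≠ ∞ := hAB ▸ hAt
  set v := ∫ x, x ∂ProbabilityTheory.cond volume A - ∫ x, x ∂ProbabilityTheory.cond volume B
    with hv
  refine ⟨v, Convex.eq_of_subset_of_measure_eq volume hA.isClosed (hBc.vadd v) ?_
    (by rw [measure_vadd, hAB]) (by rwa [measure_vadd]) (by rwa [measure_vadd])⟩
  intro a ha
  by_contra hav
  have hav' : a - v ∉ B := fun h => hav ⟨a - v, h, by simp⟩
  obtain ⟨u, s, hs, hsa⟩ := geometric_hahn_banach_closed_point hBc hB.isClosed hav'
  obtain ⟨b, hb⟩ := nonempty_of_measure_ne_zero hB0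
  have hu : u ≠ 0 := by
    rintro rfl
    have := hs b hb
    simp only [zero_apply] at this hsa
    linarith
  have hcdf := cdf_sectionLaw_add_centroid hA hB hD hDc hA0 hAB hAD hmid hu s
  have := isProbabilityMeasure_sectionLaw hA0 hAt u
  have := isProbabilityMeasure_sectionLaw hB0 hBt u
  have hlaw : sectionLaw A u (Ioi (s + u v)) = 0 := by
    have hBs : ProbabilityTheory.cdf (sectionLaw B u) s = 1 := by
      rw [ProbabilityTheory.cdf_eq_real, measureReal_def,
        sectionLaw_apply hB.measurableSet u measurableSet_Iic,
        inter_eq_self_of_subset_left (t := u ⁻¹' Iic s) fun x hx => (hs x hx).le,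
        ENNReal.inv_mul_cancel hB0 hBt, ENNReal.toReal_one]
    rw [hBs, ← hv, ProbabilityTheory.cdf_eq_real] at hcdf
    rw [← compl_Iic, ← measureReal_eq_zero_iff, probReal_compl_eq_one_sub measurableSet_Iic, hcdf,
      sub_self]
  rw [sectionLaw_apply hA.measurableSet u measurableSet_Ioi, mul_eq_zero] at hlaw
  refine hlaw.elim (ENNReal.inv_ne_zero.2 hAt) ?_
  refine hAc.measure_inter_ne_zero volume hA0 (isOpen_Ioi.preimage u.continuous) ⟨a, ha, ?_⟩
  rw [map_sub] at hsa
  simp only [mem_preimage, mem_Ioi]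
  linarith

/-- If the intersection of two closed convex sets contains its translates by small multiples of
`v` in the first set and of `z` in the second, then it is also the intersection of the cylinders
generated by the two sets in these directions. -/
theorem cylinder_inter_cylinder_subset {E : Type*} [NormedAddCommGroup E] [NormedSpace ℝ E]
    {K L : Set E} (hK : IsClosed K) (hL : IsClosed L) (hKc : Convex ℝ K) (hLc : Convex ℝ L)
    (hne : (K ∩ L).Nonempty) {v z : E}
    (hv : ∀ q ∈ K ∩ L, ∀ t ∈ Icc (-1 : ℝ) 1, q + t • v ∈ K)
    (hz : ∀ q ∈ K ∩ L, ∀ t ∈ Icc (-1 : ℝ) 1, q + t • z ∈ L) :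
    {y | ∃ x ∈ K, ∃ s : ℝ, y = x + s • v} ∩ {y | ∃ x ∈ L, ∃ s : ℝ, y = x + s • z} ⊆ K ∩ L := by
  rintro y ⟨⟨x, hx, s, hxs⟩, x', hx', s', hxs'⟩
  have advance : ∀ {M : Set E}, Convex ℝ M → ∀ {x q e : E} {s ε : ℝ}, x ∈ M →
      (∀ t ∈ Icc (-1 : ℝ) 1, q + t • e ∈ M) → 0 < ε → ε ≤ 1 / 2 → ε * |s| ≤ 1 / 2 →
      (1 - ε) • q + ε • (x + s • e) ∈ M := by
    intro M hM x q e s ε hx hq hε hε2 hεs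
    have hε' : 0 < 1 - ε := by linarith
    have hmem : q + (ε * s / (1 - ε)) • e ∈ M := by
      refine hq _ (abs_le.1 ?_)
      rw [abs_div, abs_mul, abs_of_pos hε, abs_of_pos hε', div_le_one hε']
      linarith
    have heq : (1 - ε) • q + ε • (x + s • e) =
        (1 - ε) • (q + (ε * s / (1 - ε)) • e) + ε • x := by
      have hcancel : (1 - ε) * (ε * s / (1 - ε)) = ε * s := by field_simp
      rw [smul_add (1 - ε) q, smul_smul (1 - ε), hcancel]
      module
    rw [heq]
    exact hM hmem hx hε'.le hε.le (by ring)
  obtain ⟨p, hp⟩ := hne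
  let T : Set ℝ := Icc 0 1 ∩ (fun τ : ℝ => p + τ • (y - p)) ⁻¹' (K ∩ L)
  have hT : IsCompact T := isCompact_Icc.inter_right ((hK.inter hL).preimage (by fun_prop))
  obtain ⟨τ, ⟨hτ01, hτ⟩, hmax⟩ := hT.exists_isGreatest ⟨0, by simp, by simpa using hp⟩
  simp only [mem_preimage] at hτ
  set q := p + τ • (y - p) with hq
  have hτ1 : τ = 1 := by
    by_contra hτ1
    have hlt : τ < 1 := lt_of_le_of_ne hτ01.2 hτ1
    set ε : ℝ := 1 / (2 * (1 + |s| + |s'|)) with hεdef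
    have hden : 0 < 1 + |s| + |s'| := by positivity
    have hε : 0 < ε := by positivity
    have hεle : ∀ m : ℝ, m ≤ 1 + |s| + |s'| → ε * m ≤ 1 / 2 := fun m hm => by
      rw [hεdef, div_mul_eq_mul_div, div_le_div_iff₀ (by positivity) two_pos]
      linarith
    have hε2 : ε ≤ 1 / 2 := by
      simpa using hεle 1 (by linarith [abs_nonneg s, abs_nonneg s'])
    have hqK := advance hKc hx (hv q hτ) hε hε2 (hεle |s| (by linarith [abs_nonneg s']))
    have hqL := advance hLc hx' (hz q hτ) hε hε2 (hεle |s'| (by linarith [abs_nonneg s]))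
    rw [← hxs] at hqK
    rw [← hxs'] at hqL
    have heq : (1 - ε) • q + ε • y = p + (τ + ε * (1 - τ)) • (y - p) := by
      rw [hq]; module
    rw [heq] at hqK hqL
    have hstep : 0 < ε * (1 - τ) := mul_pos hε (by linarith)
    have := hmax (a := τ + ε * (1 - τ)) ⟨⟨by linarith [hτ01.1], by nlinarith⟩, hqK, hqL⟩
    linarith
  rw [hτ1, one_smul, add_sub_cancel] at hq
  rwa [hq] at hτ

/-- Theorem 1.2 (g_{K,L} constant on a line segment): if the cross covariogram of closed
convex sets `K, L` is constant (and positive, finite) on the segment `{a + tw : t ∈ [-1,1]}`,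
then there is `v` such that `K ∩ (L + a + tw) = K' ∩ (L' + tw)` for all `t ∈ [-1,1]`, where
`K'` is the cylinder in direction `v` generated by `K` and `L'` is the cylinder in direction
`v - w` generated by `L + a`. -/
theorem covariogram_constant_on_segment
    (n : ℕ) (hn : 1 < n)
    (K L : Set (EuclideanSpace ℝ (Fin n)))
    (hKne : K.Nonempty) (hKclosed : IsClosed K) (hKconv : Convex ℝ K)
    (hLne : L.Nonempty) (hLclosed : IsClosed L) (hLconv : Convex ℝ L)
    (a w : EuclideanSpace ℝ (Fin n)) (hw : w ≠ 0)
    (hpos : 0 < volume (K ∩ (a +ᵥ L)))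
    (hfin : volume (K ∩ (a +ᵥ L)) < ⊤)
    (hconst : ∀ t ∈ Icc (-1 : ℝ) 1,
      volume (K ∩ ((a + t • w) +ᵥ L)) = volume (K ∩ (a +ᵥ L))) :
    ∃ v : EuclideanSpace ℝ (Fin n), ∀ t ∈ Icc (-1 : ℝ) 1,
      K ∩ ((a + t • w) +ᵥ L) =
        {y | ∃ x ∈ K, ∃ s : ℝ, y = x + s • v} ∩
          ((t • w) +ᵥ {y | ∃ x ∈ (a +ᵥ L), ∃ s : ℝ, y = x + s • (v - w)}) := by
  set M : ℝ → Set (EuclideanSpace ℝ (Fin n)) := fun t => K ∩ ((a + t • w) +ᵥ L) with hM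
  have hM0 : M 0 = K ∩ (a +ᵥ L) := by simp [hM]
  have hmemL : ∀ (b x : EuclideanSpace ℝ (Fin n)), x ∈ b +ᵥ L ↔ x - b ∈ L := fun b x => by
    rw [mem_vadd_set_iff_neg_vadd_mem, vadd_eq_add, neg_add_eq_sub]
  have hmem : ∀ t x, x ∈ M t ↔ x ∈ K ∧ x - (a + t • w) ∈ L := fun t x => by
    rw [hM, mem_inter_iff, hmemL]
  have hclosed : ∀ t, IsClosed (M t) := fun t => hKclosed.inter (hLclosed.vadd _)
  have hconv : ∀ t, Convex ℝ (M t) := fun t => hKconv.inter (hLconv.vadd _)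
  have hvol : ∀ t ∈ Icc (-1 : ℝ) 1, volume (M t) = volume (M 0) := fun t ht => by
    rw [hM0]; exact hconst t ht
  have h0 : volume (M 0) ≠ 0 := by rw [hM0]; exact hpos.ne'
  have htop : volume (M 0) ≠ ∞ := by rw [hM0]; exact hfin.ne
  have hcompact : ∀ t ∈ Icc (-1 : ℝ) 1, IsCompact (M t) := fun t ht =>
    Metric.isCompact_of_isClosed_isBounded (hclosed t)
      ((hconv t).isBounded_of_measure_ne_top volume (by rwa [hvol t ht]) (by rwa [hvol t ht]))
  have hcombo : ∀ (p q s t : ℝ), 0 ≤ p → 0 ≤ q → p + q = 1 → ∀ x ∈ M s, ∀ y ∈ M t,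
      p • x + q • y ∈ M (p * s + q * t) := by
    intro p q s t hp hq hpq x hx y hy
    rw [hmem] at hx hy ⊢
    refine ⟨hKconv hx.1 hy.1 hp hq hpq, ?_⟩
    convert hLconv hx.2 hy.2 hp hq hpq using 1
    obtain rfl : p = 1 - q := by linarith
    module
  have hm1 : (-1 : ℝ) ∈ Icc (-1 : ℝ) 1 := by norm_num
  have h1 : (1 : ℝ) ∈ Icc (-1 : ℝ) 1 := by norm_num
  have h00 : (0 : ℝ) ∈ Icc (-1 : ℝ) 1 := by norm_num
  obtain ⟨v', hv'⟩ := exists_vadd_eq_of_midpoint_volume_eq (hcompact 1 h1) (hcompact (-1) hm1)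
    (hcompact 0 h00) (hconv 1) (hconv (-1)) (hconv 0) (by rwa [hvol 1 h1])
    (by rw [hvol 1 h1, hvol (-1) hm1]) (hvol 1 h1).symm fun x hx y hy => by
      have := hcombo (1 / 2) (1 / 2) 1 (-1) (by norm_num) (by norm_num) (by norm_num) x hx y hy
      norm_num at this ⊢
      exact this
  set v := (1 / 2 : ℝ) • v' with hv
  have htrans : ∀ t ∈ Icc (-1 : ℝ) 1, ((1 + t) • v) +ᵥ M (-1) = M t := fun t ht => by
    refine Convex.eq_of_subset_of_measure_eq volume ((hclosed (-1)).vadd _) (hconv t) ?_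
      (by rw [measure_vadd, hvol t ht, hvol (-1) hm1]) (by rwa [hvol t ht]) (by rwa [hvol t ht])
    rintro _ ⟨x, hx, rfl⟩
    have hx' : v' + x ∈ M 1 := by
      rw [hv']; exact ⟨x, hx, rfl⟩
    have := hcombo ((1 - t) / 2) ((1 + t) / 2) (-1) 1 (by linarith [ht.2]) (by linarith [ht.1])
      (by ring) x hx _ hx'
    have ht' : (1 - t) / 2 * -1 + (1 + t) / 2 * 1 = t := by ring
    have hx'' : ((1 + t) • v) +ᵥ x = ((1 - t) / 2) • x + ((1 + t) / 2) • (v' + x) := by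
      rw [vadd_eq_add, hv]
      module
    rw [ht', ← hx''] at this
    exact this
  have hshift : ∀ t ∈ Icc (-1 : ℝ) 1, (t • v) +ᵥ M 0 = M t := fun t ht => by
    rw [← htrans t ht, ← htrans 0 h00, vadd_vadd]
    congr 1
    module
  have hcyl := cylinder_inter_cylinder_subset (v := v) (z := v - w) hKclosed (hLclosed.vadd a)
    hKconv (hLconv.vadd a) (hM0 ▸ nonempty_of_measure_ne_zero h0)
    (fun q hq t ht => by
      have : q + t • v ∈ M t := by
        rw [← hshift t ht, hM0, add_comm]; exact ⟨q, hq, rfl⟩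
      exact this.1)
    (fun q hq t ht => by
      have : q + t • v ∈ M t := by
        rw [← hshift t ht, hM0, add_comm]; exact ⟨q, hq, rfl⟩
      rw [hmem] at this
      rw [hmemL]
      convert this.2 using 1
      module)
  refine ⟨v, fun t ht => Subset.antisymm ?_ ?_⟩
  · intro y hy
    change y ∈ M t at hy
    refine ⟨⟨y, ((hmem t y).1 hy).1, 0, by simp⟩, ?_⟩
    refine ⟨y - t • w, ⟨y - t • w, ?_, 0, by simp⟩, by simp⟩
    rw [hmemL]
    convert ((hmem t y).1 hy).2 using 1
    module
  · rintro y ⟨⟨x, hx, s, rfl⟩, _, ⟨x', hx', s', rfl⟩, hy⟩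
    change _ ∈ M t
    simp only [vadd_eq_add] at hy
    rw [← hshift t ht, hM0]
    refine ⟨x + s • v - t • v, hcyl ⟨⟨x, hx, s - t, by module⟩, x', hx', s' - t, ?_⟩, by simp⟩
    rw [← hy]
    module
end

section
/- Let n > 1 and let K, L ⊆ ℝⁿ be nonempty closed convex sets whose cross covariogram g = g_{K,L} satisfies 0 < g(a) < ∞ for some a ∈ ℝⁿ. Suppose that for some t ∈ (0,1) and some x₀ ≠ x₁ with g(x₀) > 0 and g(x₁) > 0 one has g((1−t)x₀ + t x₁)^{1/n} = (1−t) g(x₀)^{1/n} + t g(x₁)^{1/n}, and set x_t := (1−t)x₀ + t x₁. Then the three convex bodies K ∩ (L + x₀), K ∩ (L + x₁), and K ∩ (L + x_t) are pairwise homothetic. -/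
open MeasureTheory Set Pointwise

/-- Two subsets of `ℝⁿ` are homothetic if one is obtained from the other by a dilation
(by a positive factor) followed by a translation. -/
def Homothetic {n : ℕ} (A B : Set (EuclideanSpace ℝ (Fin n))) : Prop :=
  ∃ c : ℝ, 0 < c ∧ ∃ x : EuclideanSpace ℝ (Fin n), B = x +ᵥ (c • A)

/-- The normalised quantile function of a positive continuous density on an open interval. -/
theorem exists_quantile {a b A : ℝ} {f : ℝ → ℝ} (hab : a < b) (hf : ContinuousOn f (Ioo a b))
    (hpos : ∀ x ∈ Ioo a b, 0 < f x) (hInt : IntegrableOn f (Ioo a b))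
    (hA : ∫ x in Ioo a b, f x = A) :
    0 < A ∧ ∃ φ : ℝ → ℝ, StrictMonoOn φ (Ioo 0 1) ∧ φ '' Ioo 0 1 = Ioo a b ∧
      ∀ τ ∈ Ioo (0 : ℝ) 1, HasDerivAt φ (A / f (φ τ)) τ := by
  have hintIcc : IntegrableOn f (Icc a b) := by rwa [integrableOn_Icc_iff_integrableOn_Ioo]
  set F : ℝ → ℝ := fun x => ∫ y in a..x, f y with hF
  have hFcont : ContinuousOn F (Icc a b) := by
    rw [← uIcc_of_le hab.le] at hintIcc ⊢
    exact intervalIntegral.continuousOn_primitive_interval hintIcc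
  have hsub : ∀ x ∈ Icc a b, ∀ y ∈ Icc a b, IntervalIntegrable f volume x y := by
    intro x hx y hy
    exact (hintIcc.mono_set (uIcc_subset_Icc hx hy)).intervalIntegrable
  have hFderiv : ∀ x ∈ Ioo a b, HasDerivAt F (f x) x := by
    intro x hx
    refine intervalIntegral.integral_hasDerivAt_right
      (hsub a (left_mem_Icc.2 hab.le) x (Ioo_subset_Icc_self hx)) ?_
      (hf.continuousAt (Ioo_mem_nhds hx.1 hx.2))
    exact hf.stronglyMeasurableAtFilter isOpen_Ioo x hx
  have hFmono : StrictMonoOn F (Icc a b) := by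
    refine strictMonoOn_of_deriv_pos (convex_Icc a b) hFcont ?_
    intro x hx
    rw [interior_Icc] at hx
    rw [(hFderiv x hx).deriv]
    exact hpos x hx
  have hFa : F a = 0 := by simp [hF]
  have hFb : F b = A := by
    rw [hF, ← hA]
    simp only
    rw [intervalIntegral.integral_of_le hab.le, integral_Ioc_eq_integral_Ioo]
  have hA0 : 0 < A := by
    rw [← hFa, ← hFb]
    exact hFmono (left_mem_Icc.2 hab.le) (right_mem_Icc.2 hab.le) hab
  refine ⟨hA0, ?_⟩
  have hex : ∀ τ : ℝ, ∃ x, τ ∈ Ioo (0 : ℝ) 1 → x ∈ Ioo a b ∧ F x = τ * A := by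
    intro τ
    by_cases hτ : τ ∈ Ioo (0 : ℝ) 1
    · have : τ * A ∈ Ioo (F a) (F b) := by
        rw [hFa, hFb]
        exact ⟨mul_pos hτ.1 hA0, by nlinarith [hτ.2]⟩
      obtain ⟨x, hx, hxe⟩ := intermediate_value_Ioo hab.le hFcont this
      exact ⟨x, fun _ => ⟨hx, hxe⟩⟩
    · exact ⟨0, fun h => absurd h hτ⟩
  choose φ hφ using hex
  have hmono : StrictMonoOn φ (Ioo 0 1) := by
    intro σ hσ τ hτ hlt
    rw [← hFmono.lt_iff_lt (Ioo_subset_Icc_self (hφ σ hσ).1) (Ioo_subset_Icc_self (hφ τ hτ).1),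
      (hφ σ hσ).2, (hφ τ hτ).2]
    exact mul_lt_mul_of_pos_right hlt hA0
  have himage : φ '' Ioo 0 1 = Ioo a b := by
    apply Subset.antisymm
    · rintro _ ⟨τ, hτ, rfl⟩
      exact (hφ τ hτ).1
    · intro x hx
      have h1 : 0 < F x := by
        rw [← hFa]
        exact hFmono (left_mem_Icc.2 hab.le) (Ioo_subset_Icc_self hx) hx.1
      have h2 : F x < A := by
        rw [← hFb]
        exact hFmono (Ioo_subset_Icc_self hx) (right_mem_Icc.2 hab.le) hx.2
      have hτ : F x / A ∈ Ioo (0 : ℝ) 1 := ⟨by positivity, by rwa [div_lt_one hA0]⟩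
      refine ⟨F x / A, hτ, ?_⟩
      apply hFmono.injOn (Ioo_subset_Icc_self (hφ _ hτ).1) (Ioo_subset_Icc_self hx)
      rw [(hφ _ hτ).2]
      field_simp
  refine ⟨φ, hmono, himage, ?_⟩
  intro τ hτ
  have hnhds : Ioo (0 : ℝ) 1 ∈ nhds τ := Ioo_mem_nhds hτ.1 hτ.2
  have hcont : ContinuousAt φ τ := by
    refine hmono.continuousAt_of_image_mem_nhds hnhds ?_
    rw [himage]
    exact Ioo_mem_nhds (hφ τ hτ).1.1 (hφ τ hτ).1.2
  have hd := ((hFderiv _ (hφ τ hτ).1).div_const A).of_local_left_inverse hcont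
    (div_pos (hpos _ (hφ τ hτ).1) hA0).ne' (by
      filter_upwards [hnhds] with σ hσ
      rw [(hφ σ hσ).2]
      field_simp)
  rwa [inv_div] at hd

/-- One-dimensional Prékopa–Leindler inequality for continuous positive densities on bounded open
intervals, together with its equality case. -/
theorem prekopa_leindler_Ioo {a b c d A B t : ℝ} {f g : ℝ → ℝ} {h : ℝ → ENNReal}
    (ht : t ∈ Ioo (0 : ℝ) 1)
    (hab : a < b) (hf : ContinuousOn f (Ioo a b)) (hfpos : ∀ x ∈ Ioo a b, 0 < f x)
    (hfint : IntegrableOn f (Ioo a b)) (hA : ∫ x in Ioo a b, f x = A)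
    (hcd : c < d) (hg : ContinuousOn g (Ioo c d)) (hgpos : ∀ x ∈ Ioo c d, 0 < g x)
    (hgint : IntegrableOn g (Ioo c d)) (hB : ∫ x in Ioo c d, g x = B)
    (hh : ∀ x ∈ Ioo a b, ∀ y ∈ Ioo c d,
      ENNReal.ofReal (f x ^ (1 - t) * g y ^ t) ≤ h ((1 - t) * x + t * y)) :
    ENNReal.ofReal (A ^ (1 - t) * B ^ t) ≤ ∫⁻ z, h z ∧
    (A = B → ∫⁻ z, h z ≤ ENNReal.ofReal A →
      ∃ e, c = a + e ∧ d = b + e ∧ ∀ x ∈ Ioo a b, g (x + e) = f x) := by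
  obtain ⟨ht0, ht1⟩ := ht
  have ht1' : 0 < 1 - t := by linarith
  obtain ⟨hA0, φ, hφm, hφi, hφd⟩ := exists_quantile hab hf hfpos hfint hA
  obtain ⟨hB0, ψ, hψm, hψi, hψd⟩ := exists_quantile hcd hg hgpos hgint hB
  have hφmem : ∀ τ ∈ Ioo (0 : ℝ) 1, φ τ ∈ Ioo a b := fun τ hτ => hφi ▸ mem_image_of_mem φ hτ
  have hψmem : ∀ τ ∈ Ioo (0 : ℝ) 1, ψ τ ∈ Ioo c d := fun τ hτ => hψi ▸ mem_image_of_mem ψ hτ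
  set θ : ℝ → ℝ := fun τ => (1 - t) * φ τ + t * ψ τ with hθ
  set θ' : ℝ → ℝ := fun τ => (1 - t) * (A / f (φ τ)) + t * (B / g (ψ τ)) with hθ'
  set k : ℝ → ℝ := fun τ => θ' τ * (f (φ τ) ^ (1 - t) * g (ψ τ) ^ t) with hk
  have hθd : ∀ τ ∈ Ioo (0 : ℝ) 1, HasDerivAt θ (θ' τ) τ := fun τ hτ =>
    ((hφd τ hτ).const_mul (1 - t)).add ((hψd τ hτ).const_mul t)
  have hθm : StrictMonoOn θ (Ioo 0 1) := by
    intro σ hσ τ hτ hlt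
    have h1 := mul_lt_mul_of_pos_left (hφm hσ hτ hlt) ht1'
    have h2 := mul_lt_mul_of_pos_left (hψm hσ hτ hlt) ht0
    simp only [hθ]
    linarith
  have hθ'pos : ∀ τ ∈ Ioo (0 : ℝ) 1, 0 < θ' τ := by
    intro τ hτ
    have := hfpos _ (hφmem τ hτ)
    have := hgpos _ (hψmem τ hτ)
    simp only [hθ']
    positivity
  have hfactor : ∀ τ ∈ Ioo (0 : ℝ) 1, A ^ (1 - t) * B ^ t =
      ((A / f (φ τ)) ^ (1 - t) * (B / g (ψ τ)) ^ t) * (f (φ τ) ^ (1 - t) * g (ψ τ) ^ t) := by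
    intro τ hτ
    have h1 := hfpos _ (hφmem τ hτ)
    have h2 := hgpos _ (hψmem τ hτ)
    rw [Real.div_rpow hA0.le h1.le, Real.div_rpow hB0.le h2.le]
    have := Real.rpow_pos_of_pos h1 (1 - t)
    have := Real.rpow_pos_of_pos h2 t
    field_simp
  have hkge : ∀ τ ∈ Ioo (0 : ℝ) 1, A ^ (1 - t) * B ^ t ≤ k τ := by
    intro τ hτ
    have h1 := hfpos _ (hφmem τ hτ)
    have h2 := hgpos _ (hψmem τ hτ)
    rw [hfactor τ hτ]
    refine mul_le_mul_of_nonneg_right ?_ (by positivity)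
    exact Real.geom_mean_le_arith_mean2_weighted ht1'.le ht0.le (by positivity) (by positivity)
      (by ring)
  have hlower : ∫⁻ τ in Ioo (0 : ℝ) 1, ENNReal.ofReal (k τ) ≤ ∫⁻ z, h z := by
    calc ∫⁻ τ in Ioo (0 : ℝ) 1, ENNReal.ofReal (k τ)
        ≤ ∫⁻ τ in Ioo (0 : ℝ) 1, ENNReal.ofReal |θ' τ| * h (θ τ) := by
          refine setLIntegral_mono' measurableSet_Ioo fun τ hτ => ?_
          rw [hk, abs_of_pos (hθ'pos τ hτ)]
          simp only
          rw [ENNReal.ofReal_mul (hθ'pos τ hτ).le]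
          gcongr
          exact hh _ (hφmem τ hτ) _ (hψmem τ hτ)
      _ = ∫⁻ z in θ '' Ioo 0 1, h z :=
          (lintegral_image_eq_lintegral_abs_deriv_mul measurableSet_Ioo
            (fun τ hτ => (hθd τ hτ).hasDerivWithinAt) hθm.injOn h).symm
      _ ≤ ∫⁻ z, h z := setLIntegral_le_lintegral _ _
  refine ⟨?_, ?_⟩
  · calc ENNReal.ofReal (A ^ (1 - t) * B ^ t)
        = ∫⁻ τ in Ioo (0 : ℝ) 1, ENNReal.ofReal (A ^ (1 - t) * B ^ t) := by simp
      _ ≤ ∫⁻ τ in Ioo (0 : ℝ) 1, ENNReal.ofReal (k τ) :=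
          setLIntegral_mono' measurableSet_Ioo fun τ hτ => ENNReal.ofReal_le_ofReal (hkge τ hτ)
      _ ≤ ∫⁻ z, h z := hlower
  · rintro rfl hle
    have hAA : A ^ (1 - t) * A ^ t = A := by
      rw [← Real.rpow_add hA0]; simp
    rw [hAA] at hkge hfactor
    have hφc : ContinuousOn φ (Ioo 0 1) := fun τ hτ => (hφd τ hτ).continuousAt.continuousWithinAt
    have hψc : ContinuousOn ψ (Ioo 0 1) := fun τ hτ => (hψd τ hτ).continuousAt.continuousWithinAt
    have hfφ : ContinuousOn (fun τ => f (φ τ)) (Ioo 0 1) := hf.comp hφc hφmem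
    have hgψ : ContinuousOn (fun τ => g (ψ τ)) (Ioo 0 1) := hg.comp hψc hψmem
    have hfne : ∀ τ ∈ Ioo (0 : ℝ) 1, f (φ τ) ≠ 0 := fun τ hτ => (hfpos _ (hφmem τ hτ)).ne'
    have hgne : ∀ τ ∈ Ioo (0 : ℝ) 1, g (ψ τ) ≠ 0 := fun τ hτ => (hgpos _ (hψmem τ hτ)).ne'
    have hkc : ContinuousOn k (Ioo 0 1) := by
      refine ContinuousOn.mul (((continuousOn_const.div hfφ hfne).const_mul _).add
        ((continuousOn_const.div hgψ hgne).const_mul _)) ?_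
      exact (hfφ.rpow_const fun τ hτ => Or.inl (hfne τ hτ)).mul
        (hgψ.rpow_const fun τ hτ => Or.inl (hgne τ hτ))
    have hkae : (fun _ => ENNReal.ofReal A) =ᵐ[volume.restrict (Ioo (0 : ℝ) 1)]
        fun τ => ENNReal.ofReal (k τ) := by
      refine ae_eq_of_ae_le_of_lintegral_le ?_ (by simp) ?_ ?_
      · exact (ae_restrict_mem measurableSet_Ioo).mono fun τ hτ =>
          ENNReal.ofReal_le_ofReal (hkge τ hτ)
      · exact (hkc.aemeasurable measurableSet_Ioo).ennreal_ofReal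
      · simpa using hlower.trans hle
    have hkae' : k =ᵐ[volume.restrict (Ioo (0 : ℝ) 1)] fun _ => A := by
      filter_upwards [hkae, ae_restrict_mem measurableSet_Ioo] with τ hτ hmem
      rw [ENNReal.ofReal_eq_ofReal_iff hA0.le (hA0.le.trans (hkge τ hmem))] at hτ
      exact hτ.symm
    have hkA : EqOn k (fun _ => A) (Ioo 0 1) :=
      Measure.eqOn_open_of_ae_eq hkae' isOpen_Ioo hkc continuousOn_const
    have hfg : ∀ τ ∈ Ioo (0 : ℝ) 1, f (φ τ) = g (ψ τ) := by
      intro τ hτ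
      have h1 := hfpos _ (hφmem τ hτ)
      have h2 := hgpos _ (hψmem τ hτ)
      have h3 := (hkA hτ).trans (hfactor τ hτ)
      have h4 : θ' τ = _ := mul_right_cancel₀ (by positivity) h3
      have h5 := (Real.geom_mean_eq_arith_mean2_weighted_iff_of_pos ht1' ht0
        (div_pos hA0 h1).le (div_pos hA0 h2).le (by ring)).1 h4.symm
      rw [div_eq_div_iff h1.ne' h2.ne'] at h5
      exact (mul_left_cancel₀ hA0.ne' h5).symm
    have hhalf : (1 / 2 : ℝ) ∈ Ioo (0 : ℝ) 1 := by norm_num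
    have hconst : ∀ τ ∈ Ioo (0 : ℝ) 1, ψ τ = φ τ + (ψ (1 / 2) - φ (1 / 2)) := by
      intro τ hτ
      have hd : ∀ σ ∈ Ioo (0 : ℝ) 1, HasDerivAt (fun σ => ψ σ - φ σ) 0 σ := by
        intro σ hσ
        have := (hψd σ hσ).sub (hφd σ hσ)
        rwa [hfg σ hσ, sub_self] at this
      have := isOpen_Ioo.is_const_of_deriv_eq_zero (convex_Ioo (0 : ℝ) 1).isPreconnected
        (fun σ hσ => (hd σ hσ).differentiableAt.differentiableWithinAt)
        (fun σ hσ => (hd σ hσ).deriv) hτ hhalf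
      linarith
    set e := ψ (1 / 2) - φ (1 / 2) with he
    have himg : Ioo c d = Ioo (a + e) (b + e) := by
      rw [← hψi, ← Set.image_add_const_Ioo, ← hφi, image_image]
      exact image_congr hconst
    refine ⟨e, ?_, ?_, ?_⟩
    · rw [← csInf_Ioo hcd, himg, csInf_Ioo (by linarith)]
    · rw [← csSup_Ioo hcd, himg, csSup_Ioo (by linarith)]
    · intro x hx
      rw [← hφi] at hx
      obtain ⟨τ, hτ, rfl⟩ := hx
      rw [hfg τ hτ, hconst τ hτ]

/-- The slice of a subset of `ℝ^(m+1)` at height `s` of the first coordinate. -/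
def slice {m : ℕ} (K : Set (Fin (m + 1) → ℝ)) (s : ℝ) : Set (Fin m → ℝ) :=
  {y | (Fin.cons s y : Fin (m + 1) → ℝ) ∈ K}

/-- The volume of the slice at height `s`. -/
noncomputable def sliceVol {m : ℕ} (K : Set (Fin (m + 1) → ℝ)) (s : ℝ) : ℝ :=
  (volume (slice K s)).toReal

theorem combo_finCons {m : ℕ} (p q s r : ℝ) (x y : Fin m → ℝ) :
    p • (Fin.cons s x : Fin (m + 1) → ℝ) + q • (Fin.cons r y : Fin (m + 1) → ℝ) =
      Fin.cons (p * s + q * r) (p • x + q • y) := by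
  ext i
  refine Fin.cases ?_ (fun j => ?_) i <;> simp

theorem IsCompact.slice {m : ℕ} {K : Set (Fin (m + 1) → ℝ)} (hK : IsCompact K) (s : ℝ) :
    IsCompact (slice K s) := by
  have hclosed : IsClosed (_root_.slice K s) :=
    hK.isClosed.preimage (continuous_const.finCons continuous_id)
  refine (hK.image (f := Fin.tail) (by unfold Fin.tail; fun_prop)).of_isClosed_subset hclosed ?_
  intro y hy
  exact ⟨_, hy, by simp⟩

theorem combo_slice_subset {m : ℕ} (K L : Set (Fin (m + 1) → ℝ)) (p q s r : ℝ) :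
    p • slice K s + q • slice L r ⊆ slice (p • K + q • L) (p * s + q * r) := by
  rintro _ ⟨_, ⟨x, hx, rfl⟩, _, ⟨y, hy, rfl⟩, rfl⟩
  change (Fin.cons _ (p • x + q • y) : Fin (m + 1) → ℝ) ∈ p • K + q • L
  rw [← combo_finCons]
  exact add_mem_add (smul_mem_smul_set hx) (smul_mem_smul_set hy)

theorem Convex.slice {m : ℕ} {K : Set (Fin (m + 1) → ℝ)} (hK : Convex ℝ K) (s : ℝ) :
    Convex ℝ (slice K s) := by
  intro x hx y hy p q hp hq hpq
  have h := hK hx hy hp hq hpq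
  rw [combo_finCons, ← add_mul, hpq, one_mul] at h
  exact h

theorem prodMk_preimage_piFinSuccAbove_symm {m : ℕ} (K : Set (Fin (m + 1) → ℝ)) (s : ℝ) :
    Prod.mk s ⁻¹' ((MeasurableEquiv.piFinSuccAbove (fun _ => ℝ) (0 : Fin (m + 1))).symm ⁻¹' K) =
      slice K s := by
  ext y
  simp [slice, Fin.consEquiv]

theorem volume_eq_lintegral_slice {m : ℕ} {K : Set (Fin (m + 1) → ℝ)} (hK : MeasurableSet K) :
    volume K = ∫⁻ s, volume (slice K s) := by
  set Φ := MeasurableEquiv.piFinSuccAbove (fun _ => ℝ) (0 : Fin (m + 1))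
  have hΦ := (volume_preserving_piFinSuccAbove (fun _ => ℝ) (0 : Fin (m + 1))).symm
  rw [← hΦ.measure_preimage_equiv K, Measure.volume_eq_prod,
    Measure.prod_apply (Φ.symm.measurable hK)]
  exact lintegral_congr fun s => congrArg volume (prodMk_preimage_piFinSuccAbove_symm K s)

theorem measurable_volume_slice {m : ℕ} {K : Set (Fin (m + 1) → ℝ)} (hK : MeasurableSet K) :
    Measurable fun s => volume (slice K s) := by
  set Φ := MeasurableEquiv.piFinSuccAbove (fun _ => ℝ) (0 : Fin (m + 1))
  have h := measurable_measure_prodMk_left (ν := (volume : Measure (Fin m → ℝ)))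
    (Φ.symm.measurable hK)
  convert h using 2 with s
  exact congrArg volume (prodMk_preimage_piFinSuccAbove_symm K s).symm

theorem ofReal_sliceVol {m : ℕ} {K : Set (Fin (m + 1) → ℝ)} (hK : IsCompact K) (s : ℝ) :
    ENNReal.ofReal (sliceVol K s) = volume (slice K s) :=
  ENNReal.ofReal_toReal (hK.slice s).measure_lt_top.ne

theorem integrable_sliceVol {m : ℕ} {K : Set (Fin (m + 1) → ℝ)} (hK : IsCompact K) :
    Integrable (sliceVol K) := by
  refine integrable_toReal_of_lintegral_ne_top
    (measurable_volume_slice hK.measurableSet).aemeasurable ?_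
  rw [← volume_eq_lintegral_slice hK.measurableSet]
  exact hK.measure_lt_top.ne

theorem integral_sliceVol {m : ℕ} {K : Set (Fin (m + 1) → ℝ)} (hK : IsCompact K) :
    ∫ s, sliceVol K s = (volume K).toReal := by
  rw [volume_eq_lintegral_slice hK.measurableSet]
  exact integral_toReal (measurable_volume_slice hK.measurableSet).aemeasurable
    (Filter.Eventually.of_forall fun s => (hK.slice s).measure_lt_top)

theorem setIntegral_apply_zero {m : ℕ} {K : Set (Fin (m + 1) → ℝ)} (hK : IsCompact K) :
    ∫ x in K, x 0 = ∫ s, s * sliceVol K s := by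
  set Φ := MeasurableEquiv.piFinSuccAbove (fun _ => ℝ) (0 : Fin (m + 1))
  have hΦ := (volume_preserving_piFinSuccAbove (fun _ => ℝ) (0 : Fin (m + 1))).symm
  have hmeas : MeasurableSet (Φ.symm ⁻¹' K) := Φ.symm.measurable hK.measurableSet
  have hInt : IntegrableOn (fun x : Fin (m + 1) → ℝ => x 0) K :=
    (continuous_apply 0).continuousOn.integrableOn_compact hK
  have hInt' : IntegrableOn (fun z => Φ.symm z 0) (Φ.symm ⁻¹' K) :=
    (hΦ.integrableOn_comp_preimage Φ.symm.measurableEmbedding).2 hInt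
  rw [← hΦ.setIntegral_preimage_emb Φ.symm.measurableEmbedding (fun x => x 0) K]
  change ∫ z in Φ.symm ⁻¹' K, Φ.symm z 0 = _
  rw [← integral_indicator hmeas, Measure.volume_eq_prod, integral_prod _
    ((integrable_indicator_iff hmeas).2 hInt')]
  refine integral_congr_ae (Filter.Eventually.of_forall fun s => ?_)
  have hind : (fun y => (Φ.symm ⁻¹' K).indicator (fun z => Φ.symm z 0) (s, y)) =
      (slice K s).indicator fun _ => s := by
    funext y
    rw [← prodMk_preimage_piFinSuccAbove_symm K s]
    simp only [indicator, mem_preimage]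
    congr 1
  simp only
  rw [hind, integral_indicator (hK.slice s).measurableSet, setIntegral_const, smul_eq_mul,
    mul_comm]
  rfl

theorem Convex.interior_nonempty_of_volume_ne_zero {E : Type*} [NormedAddCommGroup E]
    [NormedSpace ℝ E] [FiniteDimensional ℝ E] [MeasurableSpace E] [BorelSpace E]
    {μ : Measure E} [μ.IsAddHaarMeasure] {K : Set E} (hK : Convex ℝ K) (hpos : μ K ≠ 0) :
    (interior K).Nonempty := by
  by_contra hne
  rw [not_nonempty_iff_eq_empty] at hne
  refine hpos (measure_mono_null ?_ (hK.addHaar_frontier μ))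
  rw [frontier, hne, sdiff_empty]
  exact subset_closure

/-- The projection of a convex body to the first coordinate, and positivity of its slices. -/
theorem exists_slice_interval {m : ℕ} {K : Set (Fin (m + 1) → ℝ)} (hK : IsCompact K)
    (hconv : Convex ℝ K) (hpos : volume K ≠ 0) :
    ∃ a b, a < b ∧ (∀ s ∈ Ioo a b, 0 < sliceVol K s) ∧ (∀ s ∉ Icc a b, sliceVol K s = 0) ∧
      IsLUB ((fun x => x 0) '' K) b := by
  have hInt := hconv.interior_nonempty_of_volume_ne_zero hpos
  have hKne : K.Nonempty := hInt.mono interior_subset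
  set π : (Fin (m + 1) → ℝ) →ₗ[ℝ] ℝ := LinearMap.proj 0
  have hπc : Continuous π := continuous_apply 0
  set J := π '' interior K
  have hJo : IsOpen J := isOpenMap_eval 0 _ isOpen_interior
  have hJc : Convex ℝ J := hconv.interior.linear_image π
  have hJne : J.Nonempty := hInt.image _
  have hIc : IsCompact (π '' K) := hK.image hπc
  have hIne : (π '' K).Nonempty := hKne.image _
  have hsub : π '' K ⊆ Icc (sInf (π '' K)) (sSup (π '' K)) := fun s hs =>
    ⟨csInf_le hIc.bddBelow hs, le_csSup hIc.bddAbove hs⟩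
  have hIcc : Icc (sInf (π '' K)) (sSup (π '' K)) ⊆ π '' K :=
    (hconv.linear_image π).ordConnected.out (hIc.sInf_mem hIne) (hIc.sSup_mem hIne)
  have hcl : π '' K ⊆ closure J := by
    rw [← hK.isClosed.closure_eq, ← hconv.closure_interior_eq_closure_of_nonempty_interior hInt]
    exact image_closure_subset_closure_image hπc
  have hIoo : Ioo (sInf (π '' K)) (sSup (π '' K)) ⊆ J := by
    rw [← hJo.interior_eq, ← hJc.interior_closure_eq_interior_of_nonempty_interior
      (by rwa [hJo.interior_eq]), ← interior_Icc]
    exact interior_mono (hIcc.trans hcl)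
  refine ⟨sInf (π '' K), sSup (π '' K), ?_, ?_, ?_, isLUB_csSup hIne hIc.bddAbove⟩
  · have hne : (interior (Icc (sInf (π '' K)) (sSup (π '' K)))).Nonempty :=
      hJne.mono (interior_maximal ((image_mono interior_subset).trans hsub) hJo)
    rw [interior_Icc] at hne
    exact nonempty_Ioo.1 hne
  · intro s hs
    obtain ⟨x, hx, rfl⟩ := hIoo hs
    refine ENNReal.toReal_pos ?_ (hK.slice _).measure_lt_top.ne
    have hopen : IsOpen (slice (interior K) (π x)) :=
      (isOpen_interior (s := K)).preimage
        (f := fun y => (Fin.cons (π x) y : Fin (m + 1) → ℝ))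
        (continuous_const.finCons continuous_id)
    have hmem : Fin.tail x ∈ slice (interior K) (π x) := by
      change (Fin.cons (x 0) (Fin.tail x) : Fin (m + 1) → ℝ) ∈ interior K
      rwa [Fin.cons_self_tail]
    have := hopen.measure_pos volume ⟨_, hmem⟩
    exact (this.trans_le (measure_mono fun y hy => interior_subset (s := K) hy)).ne'
  · intro s hs
    have : slice K s = ∅ := by
      rw [eq_empty_iff_forall_notMem]
      exact fun y hy => hs (hsub ⟨_, hy, rfl⟩)
    simp [sliceVol, this]

/-- The multiplicative Brunn–Minkowski inequality for compact convex sets in `ℝ^m`. -/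
def MulBrunnMinkowski (m : ℕ) : Prop :=
  ∀ (K L : Set (Fin m → ℝ)), IsCompact K → Convex ℝ K → IsCompact L → Convex ℝ L →
    ∀ t ∈ Ioo (0 : ℝ) 1,
      (volume K).toReal ^ (1 - t) * (volume L).toReal ^ t ≤
        (volume ((1 - t) • K + t • L)).toReal

theorem sliceVol_combo_ge {m : ℕ} (hm : MulBrunnMinkowski m) {K L : Set (Fin (m + 1) → ℝ)}
    (hK : IsCompact K) (hKc : Convex ℝ K) (hL : IsCompact L) (hLc : Convex ℝ L)
    {t : ℝ} (ht : t ∈ Ioo (0 : ℝ) 1) (s r : ℝ) :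
    sliceVol K s ^ (1 - t) * sliceVol L r ^ t ≤
      sliceVol ((1 - t) • K + t • L) ((1 - t) * s + t * r) := by
  refine (hm _ _ (hK.slice s) (hKc.slice s) (hL.slice r) (hLc.slice r) t ht).trans ?_
  exact ENNReal.toReal_mono
    (((hK.smul (1 - t)).add (hL.smul t)).slice _).measure_lt_top.ne
    (measure_mono (combo_slice_subset K L (1 - t) t s r))

theorem continuousOn_sliceVol {m : ℕ} (hm : MulBrunnMinkowski m) {K : Set (Fin (m + 1) → ℝ)}
    (hK : IsCompact K) (hKc : Convex ℝ K) {a b : ℝ} (hpos : ∀ s ∈ Ioo a b, 0 < sliceVol K s) :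
    ContinuousOn (sliceVol K) (Ioo a b) := by
  have hlog : ConcaveOn ℝ (Ioo a b) fun s => Real.log (sliceVol K s) := by
    rw [concaveOn_iff_forall_pos]
    refine ⟨convex_Ioo a b, ?_⟩
    intro x hx y hy p q hp hq hpq
    obtain rfl : p = 1 - q := by linarith
    have hcombo : (1 - q) • K + q • K = K := by
      rw [← hKc.add_smul hp.le hq.le, sub_add_cancel, one_smul]
    have h := sliceVol_combo_ge hm hK hKc hK hKc (t := q) ⟨hq, by linarith⟩ x y
    rw [hcombo] at h
    have hx' := hpos x hx
    have hy' := hpos y hy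
    have h' := Real.log_le_log (by positivity) h
    rw [Real.log_mul (by positivity) (by positivity), Real.log_rpow hx', Real.log_rpow hy'] at h'
    simpa using h'
  have hexp := Real.continuous_exp.comp_continuousOn (hlog.continuousOn isOpen_Ioo)
  refine hexp.congr fun s hs => ?_
  simp [Real.exp_log (hpos s hs)]

theorem setIntegral_Ioo_eq_integral {f : ℝ → ℝ} {a b : ℝ} (hf : ∀ s ∉ Icc a b, f s = 0) :
    ∫ s in Ioo a b, f s = ∫ s, f s := by
  rw [← integral_Icc_eq_integral_Ioo, setIntegral_eq_integral_of_forall_compl_eq_zero hf]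

/-- Slicing along the first coordinate: the multiplicative Brunn–Minkowski inequality passes from
dimension `m` to `m + 1`, and bodies of equal volume that attain equality have the same marginals
up to a translation. -/
theorem brunn_minkowski_slice {m : ℕ} (hm : MulBrunnMinkowski m) {K L : Set (Fin (m + 1) → ℝ)}
    (hK : IsCompact K) (hKc : Convex ℝ K) (hKpos : volume K ≠ 0)
    (hL : IsCompact L) (hLc : Convex ℝ L) (hLpos : volume L ≠ 0)
    {t : ℝ} (ht : t ∈ Ioo (0 : ℝ) 1) :
    (volume K).toReal ^ (1 - t) * (volume L).toReal ^ t ≤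
        (volume ((1 - t) • K + t • L)).toReal ∧
    (volume K = volume L → volume ((1 - t) • K + t • L) ≤ volume K →
      ∃ e b, IsLUB ((fun x => x 0) '' K) b ∧ IsLUB ((fun x => x 0) '' L) (b + e) ∧
        ∫ x in L, x 0 = (∫ x in K, x 0) + e * (volume K).toReal) := by
  obtain ⟨a, b, hab, hKp, hKz, hKb⟩ := exists_slice_interval hK hKc hKpos
  obtain ⟨c, d, hcd, hLp, hLz, hLb⟩ := exists_slice_interval hL hLc hLpos
  have hM : IsCompact ((1 - t) • K + t • L) := (hK.smul _).add (hL.smul _)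
  have hmain := prekopa_leindler_Ioo (h := fun z => volume (slice ((1 - t) • K + t • L) z)) ht
    hab (continuousOn_sliceVol hm hK hKc hKp) hKp (integrable_sliceVol hK).integrableOn
    ((setIntegral_Ioo_eq_integral hKz).trans (integral_sliceVol hK))
    hcd (continuousOn_sliceVol hm hL hLc hLp) hLp (integrable_sliceVol hL).integrableOn
    ((setIntegral_Ioo_eq_integral hLz).trans (integral_sliceVol hL))
    (fun x _ y _ => by
      rw [← ofReal_sliceVol hM]
      exact ENNReal.ofReal_le_ofReal (sliceVol_combo_ge hm hK hKc hL hLc ht x y))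
  rw [← volume_eq_lintegral_slice hM.measurableSet] at hmain
  refine ⟨(ENNReal.ofReal_le_iff_le_toReal hM.measure_lt_top.ne).1 hmain.1, ?_⟩
  intro hKL hle
  rw [ENNReal.ofReal_toReal hK.measure_lt_top.ne] at hmain
  obtain ⟨e, rfl, rfl, hfg⟩ := hmain.2 (by rw [hKL]) hle
  refine ⟨e, b, hKb, hLb, ?_⟩
  have hzK : ∀ s ∉ Icc a b, s * sliceVol K s = 0 := fun s hs => by rw [hKz s hs, mul_zero]
  have hzL : ∀ s ∉ Icc (a + e) (b + e), s * sliceVol L s = 0 := fun s hs => by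
    rw [hLz s hs, mul_zero]
  have hIK : IntegrableOn (fun s => s * sliceVol K s) (Ioo a b) := by
    exact IntegrableOn.continuousOn_mul_of_subset continuousOn_id
      (integrable_sliceVol hK).integrableOn isCompact_Icc measurableSet_Ioo
      Ioo_subset_Icc_self
  rw [setIntegral_apply_zero hK, setIntegral_apply_zero hL, ← setIntegral_Ioo_eq_integral hzK,
    ← setIntegral_Ioo_eq_integral hzL, ← integral_sliceVol hK, ← setIntegral_Ioo_eq_integral hKz,
    ← integral_const_mul, ← integral_add hIK ((integrable_sliceVol hK).integrableOn.const_mul e)]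
  have hpre : (fun s : ℝ => s + e) ⁻¹' Ioo (a + e) (b + e) = Ioo a b := by
    rw [preimage_add_const_Ioo]; simp
  rw [← (measurePreserving_add_right volume e).setIntegral_preimage_emb
    (measurableEmbedding_addRight e) (fun s => s * sliceVol L s), hpre]
  refine setIntegral_congr_fun measurableSet_Ioo fun s hs => ?_
  rw [hfg s hs]
  ring

theorem mulBrunnMinkowski (m : ℕ) : MulBrunnMinkowski m := by
  induction m with
  | zero =>
    intro K L hK _ hL _ t ht
    have h1 : (0 : ℝ) < 1 - t := by linarith [ht.2]
    rcases K.eq_empty_or_nonempty with rfl | hKne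
    · simp [Real.zero_rpow h1.ne']
    rcases L.eq_empty_or_nonempty with rfl | hLne
    · simp [Real.zero_rpow ht.1.ne']
    rw [hKne.eq_univ, hLne.eq_univ,
      ((univ_nonempty.smul_set (a := 1 - t)).add (univ_nonempty.smul_set (a := t))).eq_univ]
    simp [volume_pi]
  | succ m ih =>
    intro K L hK hKc hL hLc t ht
    have h1 : (0 : ℝ) < 1 - t := by linarith [ht.2]
    by_cases hKpos : volume K = 0
    · simp [hKpos, Real.zero_rpow h1.ne']
    by_cases hLpos : volume L = 0
    · simp [hLpos, Real.zero_rpow ht.1.ne']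
    exact (brunn_minkowski_slice ih hK hKc hKpos hL hLc hLpos ht).1

section EuclideanSpace

variable {n : ℕ}

/-- Bodies of equal volume attaining equality in the Brunn–Minkowski inequality have, in each
direction, suprema differing by the displacement of the first moments. -/
theorem exists_isLUB_inner_of_volume_combo_le {K L : Set (EuclideanSpace ℝ (Fin n))}
    (hK : IsCompact K) (hKc : Convex ℝ K) (hKpos : volume K ≠ 0)
    (hL : IsCompact L) (hLc : Convex ℝ L) {t : ℝ} (ht : t ∈ Ioo (0 : ℝ) 1)
    (hKL : volume K = volume L) (hle : volume ((1 - t) • K + t • L) ≤ volume K)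
    {u : EuclideanSpace ℝ (Fin n)} (hu : ‖u‖ = 1) :
    ∃ b, IsLUB (inner ℝ u '' K) b ∧ IsLUB (inner ℝ u '' L)
      (b + inner ℝ u ((volume K).toReal⁻¹ • ((∫ x in L, x) - ∫ x in K, x))) := by
  obtain _ | m := n
  · simp [Subsingleton.elim u 0] at hu
  obtain ⟨B, hB⟩ : ∃ B : OrthonormalBasis (Fin (m + 1)) ℝ (EuclideanSpace ℝ (Fin (m + 1))),
      B 0 = u := by
    have hon : Orthonormal ℝ (({0} : Set (Fin (m + 1))).domRestrict fun _ => u) := by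
      refine ⟨fun _ => hu, fun i j hij => absurd (Subsingleton.elim i j) hij⟩
    obtain ⟨B, hB⟩ := hon.exists_orthonormalBasis_extension_of_card_eq (by simp)
    exact ⟨B, hB 0 rfl⟩
  set Φ : EuclideanSpace ℝ (Fin (m + 1)) ≃L[ℝ] (Fin (m + 1) → ℝ) :=
    B.repr.toContinuousLinearEquiv.trans (PiLp.continuousLinearEquiv 2 ℝ _) with hΦdef
  have hΦ : MeasurePreserving Φ :=
    (PiLp.volume_preserving_ofLp (Fin (m + 1))).comp B.measurePreserving_repr
  have hΦemb : MeasurableEmbedding Φ := Φ.toHomeomorph.measurableEmbedding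
  have hΦ0 : ∀ x, Φ x 0 = inner ℝ u x := by
    intro x
    rw [← hB, ← B.repr_apply_apply]
    rfl
  have hvol : ∀ S, volume (Φ '' S) = volume S := by
    intro S
    rw [← hΦ.measure_preimage_emb hΦemb, preimage_image_eq _ Φ.injective]
  have himage : ∀ S, (fun x : Fin (m + 1) → ℝ => x 0) '' (Φ '' S) = inner ℝ u '' S := by
    intro S
    rw [image_image]
    exact image_congr fun x _ => hΦ0 x
  have hmoment : ∀ S : Set (EuclideanSpace ℝ (Fin (m + 1))), IsCompact S →
      ∫ y in Φ '' S, y 0 = inner ℝ u (∫ x in S, x) := by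
    intro S hS
    rw [← hΦ.setIntegral_preimage_emb hΦemb (fun y => y 0), preimage_image_eq _ Φ.injective]
    simp only [hΦ0]
    exact integral_inner (continuous_id.continuousOn.integrableOn_compact hS) u
  have hcombo : (1 - t) • Φ '' K + t • Φ '' L = Φ '' ((1 - t) • K + t • L) := by
    rw [image_add, image_smul_set, image_smul_set]
  obtain ⟨e, b, h1, h2, h3⟩ := (brunn_minkowski_slice (mulBrunnMinkowski m)
    (hK.image Φ.continuous) (hKc.linear_image Φ.toLinearMap) (by rwa [hvol])
    (hL.image Φ.continuous) (hLc.linear_image Φ.toLinearMap) (by rwa [hvol, ← hKL]) ht).2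
    (by rw [hvol, hvol, hKL]) (by rwa [hcombo, hvol, hvol])
  rw [himage] at h1 h2
  rw [hmoment L hL, hmoment K hK, hvol] at h3
  refine ⟨b, h1, ?_⟩
  convert h2 using 2
  have hV : (volume K).toReal ≠ 0 := ENNReal.toReal_ne_zero.2 ⟨hKpos, hK.measure_lt_top.ne⟩
  rw [inner_smul_right, inner_sub_right, h3]
  field_simp
  ring

theorem subset_of_isLUB_inner {A B : Set (EuclideanSpace ℝ (Fin n))}
    (hB : IsClosed B) (hBc : Convex ℝ B) (hBne : B.Nonempty)
    (h : ∀ u : EuclideanSpace ℝ (Fin n), ‖u‖ = 1 →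
      ∃ b, IsLUB (inner ℝ u '' A) b ∧ IsLUB (inner ℝ u '' B) b) :
    A ⊆ B := by
  intro x hx
  by_contra hxB
  obtain ⟨f, c, hfc, hcx⟩ := geometric_hahn_banach_closed_point hBc hB hxB
  set w := (InnerProductSpace.toDual ℝ (EuclideanSpace ℝ (Fin n))).symm f
  have hw : ∀ y, inner ℝ w y = f y := fun y => InnerProductSpace.toDual_symm_apply
  have hw0 : w ≠ 0 := by
    intro h0
    obtain ⟨y, hy⟩ := hBne
    have h1 := hfc y hy
    rw [← hw, h0, inner_zero_left] at h1 hcx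
    linarith
  have hwpos : 0 < ‖w‖⁻¹ := inv_pos.2 (norm_pos_iff.2 hw0)
  obtain ⟨b, hbA, hbB⟩ := h (‖w‖⁻¹ • w) (by
    rw [norm_smul, norm_inv, norm_norm, inv_mul_cancel₀ (norm_ne_zero_iff.2 hw0)])
  have h1 : inner ℝ (‖w‖⁻¹ • w) x ≤ b := hbA.1 ⟨x, hx, rfl⟩
  have h2 : b ≤ ‖w‖⁻¹ * c := hbB.2 (by
    rintro _ ⟨y, hy, rfl⟩
    simp only [real_inner_smul_left, hw]
    exact mul_le_mul_of_nonneg_left (hfc y hy).le hwpos.le)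
  rw [real_inner_smul_left, hw] at h1
  exact absurd (le_of_mul_le_mul_left (h1.trans h2) hwpos) (not_le.2 hcx)

/-- Convex bodies of equal volume attaining equality in the Brunn–Minkowski inequality are
translates of each other. -/
theorem exists_vadd_eq_of_volume_combo_le {K L : Set (EuclideanSpace ℝ (Fin n))}
    (hK : IsCompact K) (hKc : Convex ℝ K) (hKpos : volume K ≠ 0)
    (hL : IsCompact L) (hLc : Convex ℝ L) {t : ℝ} (ht : t ∈ Ioo (0 : ℝ) 1)
    (hKL : volume K = volume L) (hle : volume ((1 - t) • K + t • L) ≤ volume K) :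
    ∃ v : EuclideanSpace ℝ (Fin n), L = v +ᵥ K := by
  refine ⟨(volume K).toReal⁻¹ • ((∫ x in L, x) - ∫ x in K, x), ?_⟩
  set v : EuclideanSpace ℝ (Fin n) := (volume K).toReal⁻¹ • ((∫ x in L, x) - ∫ x in K, x) with hv
  have hsupp : ∀ u : EuclideanSpace ℝ (Fin n), ‖u‖ = 1 →
      ∃ b, IsLUB (inner ℝ u '' L) b ∧ IsLUB (inner ℝ u '' (v +ᵥ K)) b := by
    intro u hu
    obtain ⟨b, hb1, hb2⟩ :=
      exists_isLUB_inner_of_volume_combo_le hK hKc hKpos hL hLc ht hKL hle hu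
    refine ⟨_, hb2, ?_⟩
    have himg : inner ℝ u '' (v +ᵥ K) = (OrderIso.addRight (inner ℝ u v)) '' (inner ℝ u '' K) := by
      rw [← image_vadd, image_image, image_image]
      refine image_congr fun x _ => ?_
      simp [inner_add_right, add_comm]
    rw [himg]
    exact (OrderIso.isLUB_image' _).2 hb1
  have hKne : K.Nonempty := nonempty_of_measure_ne_zero hKpos
  have hLne : L.Nonempty := nonempty_of_measure_ne_zero (hKL ▸ hKpos)
  exact Subset.antisymm
    (subset_of_isLUB_inner (hK.vadd v).isClosed (hKc.vadd v) hKne.vadd_set hsupp)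
    (subset_of_isLUB_inner hL.isClosed hLc hLne fun u hu =>
      let ⟨b, h1, h2⟩ := hsupp u hu; ⟨b, h2, h1⟩)

theorem Convex.isBounded_of_volume_ne_top {K : Set (EuclideanSpace ℝ (Fin n))}
    (hK : Convex ℝ K) (hcl : IsClosed K) (hpos : volume K ≠ 0) (hfin : volume K ≠ ⊤) :
    Bornology.IsBounded K := by
  obtain ⟨p, hp⟩ := hK.interior_nonempty_of_volume_ne_zero hpos
  obtain ⟨r, hr, hball⟩ := Metric.isOpen_iff.1 isOpen_interior p hp
  by_contra hunb
  set c : ENNReal := volume (Metric.ball (0 : EuclideanSpace ℝ (Fin n)) (r / 2)) with hc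
  have hcpos : 0 < c := Metric.measure_ball_pos _ _ (by positivity)
  have hlower : ∀ N : ℕ, c ≤ volume (K \ Metric.ball p N) := by
    intro N
    obtain ⟨x, hxK, hx⟩ : ∃ x ∈ K, 2 * N + r < dist x p := by
      by_contra! hall
      exact hunb (Metric.isBounded_closedBall.subset fun x hx => hall x hx)
    have hvol : volume (Metric.ball (midpoint ℝ p x) (r / 2)) = c :=
      Measure.addHaar_ball_center _ _ _
    rw [← hvol]
    refine measure_mono fun y hy => ⟨?_, ?_⟩
    · have hq : p + (2 : ℝ) • (y - midpoint ℝ p x) ∈ K := by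
        refine interior_subset (hball ?_)
        rw [Metric.mem_ball, dist_eq_norm] at hy ⊢
        rw [add_sub_cancel_left, norm_smul]
        norm_num
        linarith
      have hy' : y = midpoint ℝ (p + (2 : ℝ) • (y - midpoint ℝ p x)) x := by
        simp only [midpoint_eq_smul_add, invOf_eq_inv]
        module
      rw [hy']
      exact hK.midpoint_mem hq hxK
    · rw [Metric.mem_ball] at hy ⊢
      have h1 : dist p (midpoint ℝ p x) = dist x p / 2 := by
        rw [dist_left_midpoint, dist_comm]; norm_num; ring
      have h2 := dist_triangle_left p (midpoint ℝ p x) y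
      linarith
  have htend : Filter.Tendsto (fun N : ℕ => volume (K \ Metric.ball p N)) Filter.atTop
      (nhds (volume (⋂ N : ℕ, K \ Metric.ball p N))) := by
    refine tendsto_measure_iInter_atTop
      (fun N => (hcl.measurableSet.diff measurableSet_ball).nullMeasurableSet) ?_ ⟨0, ?_⟩
    · intro M N hMN
      exact sdiff_subset_sdiff_right (Metric.ball_subset_ball (by exact_mod_cast hMN))
    · exact measure_ne_top_of_subset sdiff_subset hfin
  have hempty : ⋂ N : ℕ, K \ Metric.ball p N = ∅ := by
    rw [eq_empty_iff_forall_notMem]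
    intro x hx
    obtain ⟨N, hN⟩ := exists_nat_gt (dist x p)
    exact (mem_iInter.1 hx N).2 hN
  rw [hempty, measure_empty] at htend
  exact absurd (ge_of_tendsto' htend hlower) (not_le.2 hcpos)

theorem Convex.subset_of_volume_le {M N : Set (EuclideanSpace ℝ (Fin n))}
    (hM : IsClosed M) (hN : Convex ℝ N)
    (hNpos : volume N ≠ 0) (hNfin : volume N ≠ ⊤) (hMN : M ⊆ N) (hle : volume N ≤ volume M) :
    N ⊆ M := by
  have hnull : volume (interior N \ M) = 0 := by
    refine measure_mono_null (sdiff_subset_sdiff_left interior_subset) ?_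
    rw [measure_sdiff hMN hM.measurableSet.nullMeasurableSet (measure_ne_top_of_subset hMN hNfin)]
    exact tsub_eq_zero_of_le hle
  have hsub : interior N ⊆ M := by
    rw [← sdiff_eq_empty, ← (isOpen_interior.sdiff hM).measure_eq_zero_iff volume]
    exact hnull
  have hInt := hN.interior_nonempty_of_volume_ne_zero hNpos
  calc N ⊆ closure N := subset_closure
    _ = closure (interior N) := (hN.closure_interior_eq_closure_of_nonempty_interior hInt).symm
    _ ⊆ M := closure_minimal hsub hM

theorem Homothetic.symm {A B : Set (EuclideanSpace ℝ (Fin n))} (h : Homothetic A B) :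
    Homothetic B A := by
  obtain ⟨c, hc, x, rfl⟩ := h
  refine ⟨c⁻¹, inv_pos.2 hc, -(c⁻¹ • x), ?_⟩
  simp only [← image_smul, ← image_vadd, image_image]
  simp [smul_smul, hc.ne']

theorem Homothetic.trans {A B C : Set (EuclideanSpace ℝ (Fin n))}
    (h : Homothetic A B) (h' : Homothetic B C) : Homothetic A C := by
  obtain ⟨c, hc, x, rfl⟩ := h
  obtain ⟨d, hd, y, rfl⟩ := h'
  refine ⟨d * c, mul_pos hd hc, y + d • x, ?_⟩
  simp only [← image_smul, ← image_vadd, image_image]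
  simp [smul_smul, add_assoc]

/-- Equality in the Brunn–Minkowski inequality, for a convex set `N` containing the Minkowski
combination of two convex bodies. -/
theorem homothetic_of_brunn_minkowski_eq {K₀ K₁ N : Set (EuclideanSpace ℝ (Fin n))}
    (h₀ : IsCompact K₀) (h₀c : Convex ℝ K₀) (h₁ : IsCompact K₁) (h₁c : Convex ℝ K₁)
    (hN : Convex ℝ N) {r₀ r₁ t : ℝ} (hr₀ : 0 < r₀) (hr₁ : 0 < r₁) (ht : t ∈ Ioo (0 : ℝ) 1)
    (hsub : (1 - t) • K₀ + t • K₁ ⊆ N)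
    (hv₀ : volume K₀ = ENNReal.ofReal (r₀ ^ n)) (hv₁ : volume K₁ = ENNReal.ofReal (r₁ ^ n))
    (hvN : volume N = ENNReal.ofReal (((1 - t) * r₀ + t * r₁) ^ n)) :
    Homothetic K₀ K₁ ∧ Homothetic K₀ N := by
  obtain ⟨ht0, ht1⟩ := ht
  have ht1' : 0 < 1 - t := by linarith
  set r := (1 - t) * r₀ + t * r₁ with hr
  have hrpos : 0 < r := by positivity
  have hscale : ∀ (c : ℝ) (S : Set (EuclideanSpace ℝ (Fin n))), 0 < c →
      volume (c • S) = ENNReal.ofReal (c ^ n) * volume S := by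
    intro c S hc
    rw [Measure.addHaar_smul, finrank_euclideanSpace_fin, abs_of_pos (by positivity)]
  have hunit : ∀ (c : ℝ) (S : Set (EuclideanSpace ℝ (Fin n))), 0 < c →
      volume S = ENNReal.ofReal (c ^ n) → volume (c⁻¹ • S) = 1 := by
    intro c S hc hS
    rw [hscale _ _ (inv_pos.2 hc), hS, ← ENNReal.ofReal_mul (by positivity), ← mul_pow,
      inv_mul_cancel₀ hc.ne', one_pow, ENNReal.ofReal_one]
  have hs : t * r₁ / r ∈ Ioo (0 : ℝ) 1 := by
    refine ⟨by positivity, ?_⟩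
    rw [div_lt_one hrpos, hr]
    nlinarith [mul_pos ht1' hr₀]
  have hs' : 1 - t * r₁ / r = (1 - t) * r₀ / r := by
    rw [hr]; field_simp; ring
  have hcombo : (1 - t * r₁ / r) • r₀⁻¹ • K₀ + (t * r₁ / r) • r₁⁻¹ • K₁ =
      r⁻¹ • ((1 - t) • K₀ + t • K₁) := by
    rw [hs', smul_add, smul_smul, smul_smul, smul_smul, smul_smul]
    congr 2 <;> field_simp
  obtain ⟨v, hv⟩ := exists_vadd_eq_of_volume_combo_le (h₀.smul r₀⁻¹) (h₀c.smul r₀⁻¹)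
    (by rw [hunit r₀ K₀ hr₀ hv₀]; exact one_ne_zero) (h₁.smul r₁⁻¹) (h₁c.smul r₁⁻¹) hs
    (by rw [hunit r₀ K₀ hr₀ hv₀, hunit r₁ K₁ hr₁ hv₁]) (by
      rw [hcombo, hunit r₀ K₀ hr₀ hv₀, ← hunit r N hrpos hvN]
      exact measure_mono (smul_set_mono hsub))
  have hK₁ : K₁ = (r₁ • v) +ᵥ ((r₁ / r₀) • K₀) := by
    have h := congrArg (fun S : Set (EuclideanSpace ℝ (Fin n)) => r₁ • S) hv
    simp only [smul_smul, mul_inv_cancel₀ hr₁.ne', one_smul] at h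
    rw [h]
    simp only [← image_smul, ← image_vadd, image_image]
    simp [smul_smul, div_eq_mul_inv]
  have hM : (1 - t) • K₀ + t • K₁ = (t • r₁ • v) +ᵥ ((r / r₀) • K₀) := by
    have h1 : r / r₀ = (1 - t) + t * (r₁ / r₀) := by rw [hr]; field_simp
    have h2 : t • K₁ = (t • r₁ • v) +ᵥ ((t * (r₁ / r₀)) • K₀) := by
      rw [hK₁]
      simp only [← image_smul, ← image_vadd, image_image]
      simp [smul_smul]
    rw [h1, h₀c.add_smul ht1'.le (by positivity), h2, add_vadd_comm]
  refine ⟨⟨_, by positivity, _, hK₁⟩, ⟨r / r₀, by positivity, t • r₁ • v, ?_⟩⟩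
  rw [← hM]
  refine Subset.antisymm (hN.subset_of_volume_le ((h₀.smul _).add (h₁.smul _)).isClosed ?_ ?_
    hsub ?_) hsub
  · rw [hvN]; exact (ENNReal.ofReal_pos.2 (by positivity)).ne'
  · rw [hvN]; exact ENNReal.ofReal_ne_top
  · rw [hM, measure_vadd, hscale _ _ (by positivity), hv₀, hvN,
      ← ENNReal.ofReal_mul (by positivity), ← mul_pow, div_mul_cancel₀ _ hr₀.ne']

end EuclideanSpace

/-- Lemma 2.2 (Equality conditions): if equality holds in the `1/n`-concavity inequality of
the cross covariogram at some `t ∈ (0,1)` with `g(x₀), g(x₁) > 0`, then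
`K ∩ (L + x₀)`, `K ∩ (L + x₁)` and `K ∩ (L + x_t)` are pairwise homothetic. -/
theorem covariogram_equality_homothetic
    (n : ℕ) (hn : 1 < n)
    (K L : Set (EuclideanSpace ℝ (Fin n)))
    (hKne : K.Nonempty) (hKclosed : IsClosed K) (hKconv : Convex ℝ K)
    (hLne : L.Nonempty) (hLclosed : IsClosed L) (hLconv : Convex ℝ L)
    (g : EuclideanSpace ℝ (Fin n) → ℝ)
    (hg : ∀ x, g x = (volume (K ∩ (x +ᵥ L))).toReal)
    (a : EuclideanSpace ℝ (Fin n))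
    (hpos : 0 < volume (K ∩ (a +ᵥ L)))
    (hfin : volume (K ∩ (a +ᵥ L)) < ⊤)
    (t : ℝ) (ht : t ∈ Ioo (0 : ℝ) 1)
    (x₀ x₁ : EuclideanSpace ℝ (Fin n)) (hne : x₀ ≠ x₁)
    (h₀ : 0 < g x₀) (h₁ : 0 < g x₁)
    (heq : g ((1 - t) • x₀ + t • x₁) ^ (1 / (n : ℝ))
      = (1 - t) * g x₀ ^ (1 / (n : ℝ)) + t * g x₁ ^ (1 / (n : ℝ))) :
    Homothetic (K ∩ (x₀ +ᵥ L)) (K ∩ (x₁ +ᵥ L)) ∧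
    Homothetic (K ∩ (x₀ +ᵥ L)) (K ∩ (((1 - t) • x₀ + t • x₁) +ᵥ L)) ∧
    Homothetic (K ∩ (x₁ +ᵥ L)) (K ∩ (((1 - t) • x₀ + t • x₁) +ᵥ L)) := by
  obtain ⟨ht0, ht1⟩ := ht
  have ht1' : 0 < 1 - t := by linarith
  have hn0 : n ≠ 0 := by omega
  set y := (1 - t) • x₀ + t • x₁ with hy
  have hconv : ∀ x : EuclideanSpace ℝ (Fin n), Convex ℝ (K ∩ (x +ᵥ L)) := fun x =>
    hKconv.inter (hLconv.vadd x)
  have hclosed : ∀ x : EuclideanSpace ℝ (Fin n), IsClosed (K ∩ (x +ᵥ L)) := fun x =>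
    hKclosed.inter (hLclosed.vadd x)
  have hcompact : ∀ x, 0 < g x → IsCompact (K ∩ (x +ᵥ L)) := by
    intro x hx
    rw [hg, ENNReal.toReal_pos_iff] at hx
    exact Metric.isCompact_of_isClosed_isBounded (hclosed x)
      ((hconv x).isBounded_of_volume_ne_top (hclosed x) hx.1.ne' hx.2.ne)
  have hvol : ∀ x, 0 < g x →
      volume (K ∩ (x +ᵥ L)) = ENNReal.ofReal ((g x ^ (1 / (n : ℝ))) ^ n) := by
    intro x hx
    rw [one_div, Real.rpow_inv_natCast_pow hx.le hn0]
    rw [hg, ENNReal.toReal_pos_iff] at hx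
    rw [hg, ENNReal.ofReal_toReal hx.2.ne]
  have hr₀ : 0 < g x₀ ^ (1 / (n : ℝ)) := Real.rpow_pos_of_pos h₀ _
  have hr₁ : 0 < g x₁ ^ (1 / (n : ℝ)) := Real.rpow_pos_of_pos h₁ _
  have hgy : 0 < g y := by
    have hnonneg : 0 ≤ g y := by rw [hg]; exact ENNReal.toReal_nonneg
    refine lt_of_le_of_ne hnonneg fun h0 => ?_
    rw [← h0, Real.zero_rpow (by positivity)] at heq
    have : 0 < (1 - t) * g x₀ ^ (1 / (n : ℝ)) + t * g x₁ ^ (1 / (n : ℝ)) := by positivity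
    linarith
  have hsub : (1 - t) • (K ∩ (x₀ +ᵥ L)) + t • (K ∩ (x₁ +ᵥ L)) ⊆ K ∩ (y +ᵥ L) := by
    rintro _ ⟨_, ⟨p, ⟨hpK, l, hl, rfl⟩, rfl⟩, _, ⟨q, ⟨hqK, l', hl', rfl⟩, rfl⟩, rfl⟩
    refine ⟨hKconv hpK hqK ht1'.le ht0.le (by ring), _,
      hLconv hl hl' ht1'.le ht0.le (by ring), ?_⟩
    simp only [hy, vadd_eq_add]
    module
  obtain ⟨h01, h0y⟩ := homothetic_of_brunn_minkowski_eq (hcompact x₀ h₀) (hconv x₀)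
    (hcompact x₁ h₁) (hconv x₁) (hconv y) hr₀ hr₁ ⟨ht0, ht1⟩ hsub (hvol x₀ h₀) (hvol x₁ h₁)
    (by rw [← heq]; exact hvol y hgy)
  exact ⟨h01, h0y, h01.symm.trans h0y⟩
end
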